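/- Let k be a positive integer and let (G, x, y) be a 2-connected rooted graph. If every vertex v of G other than x and y has degree at least 2k in G, then G contains k paths from x to y satisfying the length condition. -/

import Mathlib

/-!
The statement is proved by strong induction on the number of vertices, in the following form. Delete
`x` and `y`: put `C = V \ {x, y}`, `P = N(x) ∩ C`, `Q = N(y) ∩ C`. One looks for `k` paths inside `C`,
each from `P` to `Q`, of lengths `l, l + 2, …, l + 2(k - 1)` (`HasAP`). The hypotheses become `Good`:
every component of `C` meets both `P` and `Q`, every component of `C - c` meets `P ∪ Q`, and each
vertex `v` has at least `2k` neighbours once membership of `P` and of `Q` is counted as a neighbour.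
`Good` is symmetric in `P` and `Q`.

*Induction step* (`step`). Suppose a set `S` contains, for each root `r` in some `R ⊆ S`, `g` paths
from `P` to `r` of lengths `m, m + 2, …`, and a connected `L` disjoint from `S` has attached to it a
set `Z ⊆ L` of vertices from which `Q` is reached by exits of one common length. If `L` with
terminals `N(R) ∩ L` and `Z` satisfies the hypotheses for `k + 1 - g`, then combining the `g` starts
with the `k + 1 - g` paths across `L` gives `g + (k + 1 - g) - 1 = k` lengths. A suitable `L` comes
from `piece`: in a connected set with marked vertices take either the whole set or a smallest
connected part that a single vertex separates from the marked vertices.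

*Reduction* (`red`). If some vertex cuts off a part of `C` missing `Q` (or `P`), such a piece is
smaller and has its own exit, so induction applies. Hence every part cut off by a vertex meets both
`P` and `Q` (`Strong`). Under this assumption, for `k ≥ 3`, a cut vertex (`Strong.r2'`), or two
vertices separating a part that meets `P` and misses `Q` from some further vertex (`Strong.r2`),
already give the conclusion.

*Core*. Choose `A ⊆ C` of largest size such that the set `B` of vertices of `P` adjacent to
all of `A` has at least `|A| + 1` elements (`MaxCore`). The complete bipartite graph between `A` and
`B` supplies `|A| + 1` starts ending at any vertex of `B` and `|A|` starts ending at any vertex of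
`A`, while maximality bounds the number of neighbours in `A ∪ B` of a vertex outside. So if a
component of `C \ (A ∪ B)` meets `Q`, the induction step applies to a piece of it; this is
`Strong.gen`, stated for an arbitrary complete bipartite subgraph because some vertices of the
core may have to be released and used for the exit instead.

*Conclusion*. If the paths do not exist, then `Q ⊆ A ∪ B` together with tight
numerical constraints (`Strong.tame`), and symmetrically `P ⊆ A' ∪ B'` for a core `(A', B')` on the
`Q` side. An exchange argument (`Strong.nd_le_of_mem`) sharpens the degree bounds when `Q` meets `A`.
If `Q` meets `A`, or `P` is not contained in `A ∪ B`, some vertex `a ∈ A ∩ Q` can be released from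
a core (`Strong.case1`, `Strong.case1_of`); otherwise, by symmetry, `P = Q = B`, and
one vertex of `A` and one of `B` are released (`Strong.case2`).
-/

open SimpleGraph

/-- A finite simple graph is 2-connected if it is connected, has at least 3 vertices,
and remains connected after deleting any single vertex. -/
def TwoConnected {V : Type*} [Fintype V] (G : SimpleGraph V) : Prop :=
  G.Connected ∧ 3 ≤ Fintype.card V ∧
    ∀ v : V, (G.induce ({v}ᶜ : Set V)).Connected

/-- The rooted graph `(G, x, y)` is 2-connected if `x ≠ y` and the graph obtained
from `G` by adding the edge `xy` (when absent) is 2-connected. -/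
def RootedTwoConnected {V : Type*} [Fintype V] (G : SimpleGraph V) (x y : V) : Prop :=
  x ≠ y ∧ TwoConnected (G ⊔ SimpleGraph.fromEdgeSet {s(x, y)})

noncomputable section

open Classical

namespace PathAP

variable {V : Type*}

/-! ### Paths with prescribed support, components, complete bipartite graphs -/

/-- `G` has a path from `u` to `v` of length `n` all of whose vertices lie in `S`. -/
def PL (G : SimpleGraph V) (S : Finset V) (u v : V) (n : ℕ) : Prop :=
  ∃ p : G.Walk u v, p.IsPath ∧ p.length = n ∧ ∀ x ∈ p.support, x ∈ S

/-- The number of neighbours of `v` in `S`. -/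
def nd (G : SimpleGraph V) (v : V) (S : Finset V) : ℕ := (S.filter (G.Adj v)).card

/-- The vertices of `L` that have a neighbour in `R`. -/
def nb (G : SimpleGraph V) (R L : Finset V) : Finset V :=
  L.filter (fun v => ∃ r ∈ R, G.Adj r v)

/-- The indicator of a proposition, used for counting roots as neighbours. -/
def ind (p : Prop) : ℕ := if p then 1 else 0

/-- `K` is closed under adjacency within `S`; for `K ⊆ S` this says that `K` is a union of
components of the graph induced on `S`. -/
def Cl (G : SimpleGraph V) (S K : Finset V) : Prop :=
  ∀ u ∈ K, ∀ v ∈ S, G.Adj u v → v ∈ K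

/-- The graph induced on `S` is nonempty and connected, phrased without walks: `S` is the only
nonempty union of components. -/
def Conn (G : SimpleGraph V) (S : Finset V) : Prop :=
  S.Nonempty ∧ ∀ K ⊆ S, K.Nonempty → Cl G S K → K = S

/-- There are `k` paths inside `C` from `P` to `Q` whose lengths are `l, l + 2, …, l + 2(k - 1)` for
some `l`. The ends may differ from path to path, and length `0` is allowed. -/
def HasAP (G : SimpleGraph V) (C P Q : Finset V) (k : ℕ) : Prop :=
  ∃ l : ℕ, ∀ i < k, ∃ p ∈ P, ∃ q ∈ Q, PL G C p q (l + 2 * i)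

/-- An exit of length `e` from `z` to `Q` through `X`: either `z ∈ Q` and `e = 0`, or an edge from `z`
followed by a path inside `X` ending in `Q`, with `e` edges in total. -/
def Exit (G : SimpleGraph V) (X Q : Finset V) (z : V) (e : ℕ) : Prop :=
  (z ∈ Q ∧ e = 0) ∨ ∃ w q e', G.Adj z w ∧ PL G X w q e' ∧ q ∈ Q ∧ e = e' + 1

lemma ind_le (p : Prop) : ind p ≤ 1 := by unfold ind; split_ifs <;> omega
lemma ind_pos {p : Prop} (h : p) : ind p = 1 := by simp [ind, h]
lemma ind_neg {p : Prop} (h : ¬ p) : ind p = 0 := by simp [ind, h]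

lemma nd_union_le (G : SimpleGraph V) (v : V) (S T : Finset V) :
    nd G v (S ∪ T) ≤ nd G v S + nd G v T := by
  unfold nd; rw [Finset.filter_union]; exact Finset.card_union_le _ _

lemma nd_le_of_subset {G : SimpleGraph V} {v : V} {S T : Finset V}
    (h : ∀ u ∈ S, G.Adj v u → u ∈ T) : nd G v S ≤ nd G v T := by
  unfold nd
  apply Finset.card_le_card
  intro u hu
  simp only [Finset.mem_filter] at hu ⊢
  exact ⟨h u hu.1 hu.2, hu.2⟩

lemma nd_singleton (G : SimpleGraph V) (v w : V) : nd G v {w} = ind (G.Adj v w) := by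
  unfold nd ind; rw [Finset.filter_singleton]; split_ifs <;> simp

lemma nd_le_card (G : SimpleGraph V) (v : V) (S : Finset V) : nd G v S ≤ S.card :=
  Finset.card_filter_le _ _

lemma nd_eq_zero {G : SimpleGraph V} {v : V} {S : Finset V} (h : ∀ u ∈ S, ¬ G.Adj v u) :
    nd G v S = 0 := by
  unfold nd; rw [Finset.card_eq_zero, Finset.filter_eq_empty_iff]; exact fun {x} hx => h x hx

lemma nd_pos {G : SimpleGraph V} {v : V} {S : Finset V} (h : 0 < nd G v S) :
    ∃ u ∈ S, G.Adj v u := by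
  by_contra! hc
  rw [nd_eq_zero hc] at h; omega

lemma nd_eq_card {G : SimpleGraph V} {v : V} {S : Finset V} (h : S.card ≤ nd G v S) :
    ∀ u ∈ S, G.Adj v u := by
  unfold nd at h
  have := Finset.eq_of_subset_of_card_le (Finset.filter_subset (G.Adj v) S) h
  intro u hu
  rw [← this] at hu
  exact (Finset.mem_filter.1 hu).2

lemma mem_nb {G : SimpleGraph V} {R L : Finset V} {v : V} :
    v ∈ nb G R L ↔ v ∈ L ∧ ∃ r ∈ R, G.Adj r v := by simp [nb]

lemma PL.refl {G : SimpleGraph V} {S : Finset V} {u : V} (h : u ∈ S) : PL G S u u 0 :=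
  ⟨SimpleGraph.Walk.nil, by simp, rfl, by simpa using h⟩

lemma PL.mono {G : SimpleGraph V} {S T : Finset V} {u v : V} {n : ℕ} (h : PL G S u v n)
    (hST : S ⊆ T) : PL G T u v n := by
  obtain ⟨p, h1, h2, h3⟩ := h
  exact ⟨p, h1, h2, fun x hx => hST (h3 x hx)⟩

lemma PL.symm {G : SimpleGraph V} {S : Finset V} {u v : V} {n : ℕ} (h : PL G S u v n) :
    PL G S v u n := by
  obtain ⟨p, h1, h2, h3⟩ := h
  exact ⟨p.reverse, h1.reverse, by simpa using h2, by simpa using h3⟩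

lemma PL.left_mem {G : SimpleGraph V} {S : Finset V} {u v : V} {n : ℕ} (h : PL G S u v n) :
    u ∈ S := by
  obtain ⟨p, h1, h2, h3⟩ := h
  exact h3 _ p.start_mem_support

lemma PL.right_mem {G : SimpleGraph V} {S : Finset V} {u v : V} {n : ℕ} (h : PL G S u v n) :
    v ∈ S := h.symm.left_mem

lemma PL.join {G : SimpleGraph V} {S T : Finset V} {u v w t : V} {m n : ℕ}
    (h : PL G S u v m) (hvw : G.Adj v w) (h' : PL G T w t n) (hd : Disjoint S T) :
    PL G (S ∪ T) u t (m + 1 + n) := by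
  obtain ⟨p, h1, h2, h3⟩ := h
  obtain ⟨q, k1, k2, k3⟩ := h'
  refine ⟨p.append (SimpleGraph.Walk.cons hvw q), ?_, ?_, ?_⟩
  · rw [SimpleGraph.Walk.isPath_def, SimpleGraph.Walk.support_append,
      SimpleGraph.Walk.support_cons, List.tail_cons, List.nodup_append]
    refine ⟨h1.support_nodup, k1.support_nodup, ?_⟩
    intro a ha b hb hab
    subst hab
    exact Finset.disjoint_left.1 hd (h3 _ ha) (k3 _ hb)
  · rw [SimpleGraph.Walk.length_append, SimpleGraph.Walk.length_cons]; omega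
  · intro x hx
    rw [SimpleGraph.Walk.support_append,
      SimpleGraph.Walk.support_cons, List.tail_cons, List.mem_append] at hx
    rcases hx with hx | hx
    · exact Finset.mem_union_left _ (h3 _ hx)
    · exact Finset.mem_union_right _ (k3 _ hx)

lemma PL.toExit {G : SimpleGraph V} {S X Q : Finset V} {u v : V} {m e : ℕ}
    (h : PL G S u v m) (hx : Exit G X Q v e) (hd : Disjoint S X) :
    ∃ q ∈ Q, PL G (S ∪ X) u q (m + e) := by
  rcases hx with ⟨hv, rfl⟩ | ⟨w, q, e', h1, h2, h3, rfl⟩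
  · exact ⟨v, hv, by simpa using h.mono Finset.subset_union_left⟩
  · refine ⟨q, h3, ?_⟩
    have := h.join h1 h2 hd
    rwa [show m + 1 + e' = m + (e' + 1) by omega] at this

lemma HasAP.mono {G : SimpleGraph V} {C C' P P' Q Q' : Finset V} {k k' : ℕ}
    (h : HasAP G C P Q k) (hC : C ⊆ C') (hP : P ⊆ P') (hQ : Q ⊆ Q') (hk : k' ≤ k) :
    HasAP G C' P' Q' k' := by
  obtain ⟨l, h⟩ := h
  refine ⟨l, fun i hi => ?_⟩
  obtain ⟨p, hp, q, hq, hpq⟩ := h i (by omega)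
  exact ⟨p, hP hp, q, hQ hq, hpq.mono hC⟩

lemma HasAP.symm {G : SimpleGraph V} {C P Q : Finset V} {k : ℕ}
    (h : HasAP G C P Q k) : HasAP G C Q P k := by
  obtain ⟨l, h⟩ := h
  refine ⟨l, fun i hi => ?_⟩
  obtain ⟨p, hp, q, hq, hpq⟩ := h i (by omega)
  exact ⟨q, hq, p, hp, hpq.symm⟩

/-- If each `r ∈ R` is the end of `g` starts from `P` with lengths in steps of `2`, and `k` admissible
paths begin at neighbours of `R`, the sums of the lengths run through `g + k - 1` values in steps of
`2`. -/
lemma HasAP.extStart {G : SimpleGraph V} {S M R P Q : Finset V} {k g m : ℕ}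
    (h : HasAP G M (nb G R M) Q k)
    (hs : ∀ r ∈ R, ∀ j < g, ∃ p ∈ P, PL G S p r (m + 2 * j))
    (hd : Disjoint S M) (hg : 1 ≤ g) (hk : 1 ≤ k) :
    HasAP G (S ∪ M) P Q (g + k - 1) := by
  obtain ⟨l, h⟩ := h
  refine ⟨m + 1 + l, fun i hi => ?_⟩
  obtain ⟨v, hv, q, hq, hvq⟩ := h (i - min i (g - 1)) (by omega)
  obtain ⟨hvM, r, hr, hrv⟩ := mem_nb.1 hv
  obtain ⟨p, hp, hpr⟩ := hs r hr (min i (g - 1)) (by omega)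
  refine ⟨p, hp, q, hq, ?_⟩
  have := hpr.join hrv hvq hd
  convert this using 1
  omega

lemma HasAP.extExit {G : SimpleGraph V} {L X P Z Q : Finset V} {k e : ℕ}
    (h : HasAP G L P Z k) (hx : ∀ z ∈ Z, Exit G X Q z e) (hd : Disjoint L X) :
    HasAP G (L ∪ X) P Q k := by
  obtain ⟨l, h⟩ := h
  refine ⟨l + e, fun i hi => ?_⟩
  obtain ⟨p, hp, z, hz, hpz⟩ := h i hi
  obtain ⟨q, hq, hpq⟩ := hpz.toExit (hx z hz) hd
  refine ⟨p, hp, q, hq, ?_⟩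
  convert hpq using 1
  omega

/-- In a complete bipartite graph with sides `A`, `B`, every vertex of `B` is the end of a path from `B`
of length `2j`, as long as `j ≤ |A|` and `j < |B|`. -/
lemma bip_even {G : SimpleGraph V} (j : ℕ) : ∀ (A B : Finset V), Disjoint A B →
    (∀ a ∈ A, ∀ b ∈ B, G.Adj a b) → ∀ b ∈ B, j ≤ A.card → j + 1 ≤ B.card →
    ∃ b' ∈ B, PL G (A ∪ B) b' b (2 * j) := by
  induction j with
  | zero =>
    intro A B _ _ b hb _ _
    exact ⟨b, hb, PL.refl (Finset.mem_union_right _ hb)⟩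
  | succ j ih =>
    intro A B hd hAB b hb hA hB
    obtain ⟨a, ha⟩ : A.Nonempty := Finset.card_pos.1 (by omega)
    have hcB : (B.erase b).card = B.card - 1 := Finset.card_erase_of_mem hb
    have hcA : (A.erase a).card = A.card - 1 := Finset.card_erase_of_mem ha
    obtain ⟨b1, hb1⟩ : (B.erase b).Nonempty := Finset.card_pos.1 (by omega)
    obtain ⟨b0, hb0, h0⟩ := ih (A.erase a) (B.erase b)
      (hd.mono (Finset.erase_subset _ _) (Finset.erase_subset _ _))
      (fun x hx y hy => hAB x (Finset.mem_of_mem_erase hx) y (Finset.mem_of_mem_erase hy))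
      b1 hb1 (by omega) (by omega)
    have hab : a ≠ b := fun h => Finset.disjoint_left.1 hd ha (h ▸ hb)
    have h1 : PL G {a, b} a b 1 := by
      have := (PL.refl (G := G) (Finset.mem_singleton_self a)).join (hAB a ha b hb)
        (PL.refl (Finset.mem_singleton_self b)) (by simpa using hab)
      simpa using this
    have h2 := h0.join (hAB a ha b1 (Finset.mem_of_mem_erase hb1)).symm h1 (by
      rw [Finset.disjoint_left]
      intro x hx
      simp only [Finset.mem_union, Finset.mem_erase, Finset.mem_insert,
        Finset.mem_singleton] at hx ⊢
      rintro (rfl | rfl)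
      · rcases hx with hx | hx
        · exact hx.1 rfl
        · exact Finset.disjoint_left.1 hd ha hx.2
      · rcases hx with hx | hx
        · exact Finset.disjoint_left.1 hd hx.2 hb
        · exact hx.1 rfl)
    refine ⟨b0, Finset.mem_of_mem_erase hb0, ?_⟩
    rw [show 2 * (j + 1) = 2 * j + 1 + 1 by ring]
    apply h2.mono
    intro x hx
    simp only [Finset.mem_union, Finset.mem_erase, Finset.mem_insert,
        Finset.mem_singleton] at hx ⊢
    rcases hx with (hx | hx) | (rfl | rfl) <;> tauto

/-- Paths of odd length from `B` to a given vertex of `A`: append `a` to an even path avoiding `a`. -/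
lemma bip_odd {G : SimpleGraph V} (j : ℕ) (A B : Finset V) (hd : Disjoint A B)
    (hAB : ∀ a ∈ A, ∀ b ∈ B, G.Adj a b) (a : V) (ha : a ∈ A) (hA : j + 1 ≤ A.card)
    (hB : j + 1 ≤ B.card) :
    ∃ b' ∈ B, PL G (A ∪ B) b' a (1 + 2 * j) := by
  obtain ⟨b, hb⟩ : B.Nonempty := Finset.card_pos.1 (by omega)
  have hcA : (A.erase a).card = A.card - 1 := Finset.card_erase_of_mem ha
  obtain ⟨b0, hb0, h0⟩ := bip_even (G := G) j (A.erase a) B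
      (hd.mono_left (Finset.erase_subset _ _))
      (fun x hx y hy => hAB x (Finset.mem_of_mem_erase hx) y hy) b hb (by omega) hB
  refine ⟨b0, hb0, ?_⟩
  have h2 := h0.join (hAB a ha b hb).symm (PL.refl (Finset.mem_singleton_self a)) (by
      rw [Finset.disjoint_singleton_right]
      simp only [Finset.mem_union, Finset.mem_erase]
      rintro (h | h)
      · exact h.1 rfl
      · exact Finset.disjoint_left.1 hd ha h)
  rw [show 1 + 2 * j = 2 * j + 1 + 0 by ring]
  apply h2.mono
  intro x hx
  simp only [Finset.mem_union, Finset.mem_erase, Finset.mem_singleton] at hx ⊢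
  rcases hx with (hx | hx) | rfl <;> tauto

/-- Some vertex of `Z` can be reached from `u` inside `S` if every union of components of `S` containing
`u` meets `Z`. -/
lemma exists_PL {G : SimpleGraph V} {S Z : Finset V} {u : V} (hu : u ∈ S)
    (h : ∀ K ⊆ S, u ∈ K → Cl G S K → (K ∩ Z).Nonempty) :
    ∃ z ∈ Z, ∃ n, PL G S u z n := by
  have := h (S.filter (fun v => ∃ n, PL G S u v n)) (Finset.filter_subset _ _)
    (Finset.mem_filter.2 ⟨hu, 0, PL.refl hu⟩) (by
      intro v hv w hw hvw
      obtain ⟨hvS, n, p, hp, hpn, hpS⟩ := Finset.mem_filter.1 hv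
      refine Finset.mem_filter.2 ⟨hw, ?_⟩
      refine ⟨_, (p.concat hvw).bypass, SimpleGraph.Walk.bypass_isPath _, rfl, ?_⟩
      intro x hx
      have := SimpleGraph.Walk.support_bypass_subset_support _ hx
      rw [SimpleGraph.Walk.support_concat] at this
      simp only [List.mem_append, List.mem_singleton] at this
      rcases this with h | rfl
      · exact hpS _ h
      · exact hw)
  obtain ⟨z, hz⟩ := this
  simp only [Finset.mem_inter, Finset.mem_filter] at hz
  exact ⟨z, hz.2, hz.1.2⟩

lemma Conn.exists_PL {G : SimpleGraph V} {S Z : Finset V} (hS : Conn G S) {u : V} (hu : u ∈ S)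
    (hZ : (S ∩ Z).Nonempty) : ∃ z ∈ Z, ∃ n, PL G S u z n := by
  apply PathAP.exists_PL hu
  intro K hK huK hcl
  rw [hS.2 K hK ⟨u, huK⟩ hcl]; exact hZ

/-- The component of `v` in `S`, as a smallest closed set containing `v`. -/
lemma exists_comp (G : SimpleGraph V) {S : Finset V} {v : V} (hv : v ∈ S) :
    ∃ U ⊆ S, v ∈ U ∧ Conn G U ∧ Cl G S U := by
  obtain ⟨U, hU, hmin⟩ := Finset.exists_min_image
    (S.powerset.filter (fun U => v ∈ U ∧ Cl G S U)) Finset.card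
    ⟨S, by simp [hv]; intro u hu w hw _; exact hw⟩
  simp only [Finset.mem_filter, Finset.mem_powerset] at hU hmin
  obtain ⟨hUS, hvU, hcl⟩ := hU
  refine ⟨U, hUS, hvU, ⟨⟨v, hvU⟩, ?_⟩, hcl⟩
  intro K hK hne hKcl
  have hK' : Cl G S K := fun u hu w hw huw => hKcl u hu w (hcl u (hK hu) w hw huw) huw
  by_cases hvK : v ∈ K
  · exact Finset.eq_of_subset_of_card_le hK (hmin K ⟨hK.trans hUS, hvK, hK'⟩)
  · exfalso
    have := hmin (U \ K) ⟨Finset.sdiff_subset.trans hUS, by simp [hvU, hvK], by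
      intro u hu w hw huw
      rw [Finset.mem_sdiff] at hu ⊢
      exact ⟨hcl u hu.1 w hw huw, fun hwK => hu.2 (hKcl w hwK u hu.1 huw.symm)⟩⟩
    rw [Finset.card_sdiff_of_subset hK] at this
    have h1 := Finset.card_pos.2 hne
    have h2 := Finset.card_le_card hK
    omega

variable {G : SimpleGraph V}

/-! ### The induction hypothesis and the induction step -/

/-- The hypotheses on `(G, x, y)` after deleting the roots: `C` is the remaining vertex set and `P`, `Q`
are the neighbourhoods of `x` and `y` in it. The fields `hP`, `hQ`, `hc` express 2-connectivity of the
rooted graph; in `deg` the indicators stand for the edges to `x` and `y`. -/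
structure Good (G : SimpleGraph V) (C P Q : Finset V) (k : ℕ) : Prop where
  ne : C.Nonempty
  hPC : P ⊆ C
  hQC : Q ⊆ C
  hP : ∀ K ⊆ C, K.Nonempty → Cl G C K → (K ∩ P).Nonempty
  hQ : ∀ K ⊆ C, K.Nonempty → Cl G C K → (K ∩ Q).Nonempty
  hc : ∀ c ∈ C, ∀ K ⊆ C.erase c, K.Nonempty → Cl G (C.erase c) K → (K ∩ (P ∪ Q)).Nonempty
  deg : ∀ v ∈ C, 2 * k ≤ nd G v C + ind (v ∈ P) + ind (v ∈ Q)

/-- The theorem holds for all instances inside `G` with fewer than `n` vertices. -/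
def IH (G : SimpleGraph V) (n : ℕ) : Prop :=
  ∀ (C P Q : Finset V) (k : ℕ), C.card < n → Good G C P Q k → HasAP G C P Q k

lemma Good.symm {C P Q : Finset V} {k : ℕ} (h : Good G C P Q k) : Good G C Q P k where
  ne := h.ne
  hPC := h.hQC
  hQC := h.hPC
  hP := h.hQ
  hQ := h.hP
  hc := by intro c hc K hK hne hcl; rw [Finset.union_comm]; exact h.hc c hc K hK hne hcl
  deg := by intro v hv; have := h.deg v hv; omega

lemma Good.of_conn {C P Q : Finset V} {k : ℕ} (hC : Conn G C) (hPC : P ⊆ C) (hQC : Q ⊆ C)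
    (hP : P.Nonempty) (hQ : Q.Nonempty)
    (hc : ∀ c ∈ C, ∀ K ⊆ C.erase c, K.Nonempty → Cl G (C.erase c) K → (K ∩ (P ∪ Q)).Nonempty)
    (deg : ∀ v ∈ C, 2 * k ≤ nd G v C + ind (v ∈ P) + ind (v ∈ Q)) : Good G C P Q k where
  ne := hC.1
  hPC := hPC
  hQC := hQC
  hP := by
    intro K hK hne hcl
    rw [hC.2 K hK hne hcl, Finset.inter_eq_right.2 hPC]; exact hP
  hQ := by
    intro K hK hne hcl
    rw [hC.2 K hK hne hcl, Finset.inter_eq_right.2 hQC]; exact hQ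
  hc := hc
  deg := deg

/-- The end-piece lemma. Let `U` be connected and let every `z ∈ Z0` have an exit of length `e0`. There
is a connected `L ⊆ U` with exits of a common length from a set `Z ⊆ L`, such that no vertex of `L`
cuts off a part of `L` missing `Z`, and such that no vertex of `L` loses degree when the marks `Z`
are counted. Either `L = U`, or `L` is a smallest connected part that a vertex `c` separates from
`Z0`; in the latter case `Z` consists of the neighbours of `c` and the exits pass through `c`. -/
lemma piece {U Z0 X0 Q : Finset V} {e0 : ℕ} (hU : Conn G U) (hZ : Z0 ⊆ U) (hZne : Z0.Nonempty)
    (hex : ∀ z ∈ Z0, Exit G X0 Q z e0) (hX : Disjoint X0 U) :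
    ∃ L Z X : Finset V, ∃ e : ℕ, L ⊆ U ∧ Conn G L ∧ Z ⊆ L ∧ Z.Nonempty ∧
      (∀ c ∈ L, ∀ K ⊆ L.erase c, K.Nonempty → Cl G (L.erase c) K → (K ∩ Z).Nonempty) ∧
      (∀ z ∈ Z, Exit G X Q z e) ∧ X ⊆ X0 ∪ (U \ L) ∧
      (∀ v ∈ L, nd G v U + ind (v ∈ Z0) ≤ nd G v L + ind (v ∈ Z)) ∧
      ((L = U ∧ Z = Z0) ∨ ∃ c ∈ U \ L, (∀ v ∈ L, ∀ u ∈ U, G.Adj v u → u ∈ L ∨ u = c) ∧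
        Disjoint L Z0 ∧ Z = L.filter (G.Adj c)) := by
  by_cases hI : ∀ c ∈ U, ∀ K ⊆ U.erase c, K.Nonempty → Cl G (U.erase c) K → (K ∩ Z0).Nonempty
  · exact ⟨U, Z0, X0, e0, subset_rfl, hU, hZ, hZne, hI, hex, Finset.subset_union_left,
      fun v _ => le_rfl, Or.inl ⟨rfl, rfl⟩⟩
  push Not at hI
  obtain ⟨c0, hc0, K0, hK0, hK0ne, hK0cl, hK0Z⟩ := hI
  -- `F L`: `L` is connected, misses `Z0`, and is attached to the rest of `U` at one vertex at most
  let F : Finset V → Prop := fun L => ∃ c ∈ U, c ∉ L ∧ Conn G L ∧ Disjoint L Z0 ∧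
    (∀ v ∈ L, ∀ u ∈ U, G.Adj v u → u ∈ L ∨ u = c)
  have hF0 : ∃ L ⊆ U, F L := by
    obtain ⟨v, hv⟩ := hK0ne
    obtain ⟨L, hLK, hvL, hL, hLcl⟩ := exists_comp G hv
    have hcK : c0 ∉ K0 := fun h => Finset.notMem_erase c0 U (hK0 h)
    refine ⟨L, fun x hx => Finset.mem_of_mem_erase (hK0 (hLK hx)), c0, hc0,
      fun h => hcK (hLK h), hL, ?_, ?_⟩
    · rw [Finset.disjoint_iff_inter_eq_empty, ← Finset.subset_empty, ← hK0Z]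
      exact Finset.inter_subset_inter_right hLK
    · intro v hv u hu huv
      by_cases huc : u = c0
      · exact Or.inr huc
      · exact Or.inl (hLcl v hv u (hK0cl v (hLK hv) u (Finset.mem_erase.2 ⟨huc, hu⟩) huv) huv)
  obtain ⟨L, hL0, hmin⟩ := Finset.exists_min_image (U.powerset.filter F) Finset.card (by
    obtain ⟨L, h1, h2⟩ := hF0
    exact ⟨L, by simp [h1, h2]⟩)
  simp only [Finset.mem_filter, Finset.mem_powerset] at hL0 hmin
  obtain ⟨hLU, c, hcU, hcL, hL, hLZ, hLn⟩ := hL0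
  have hZ1 : (L.filter (G.Adj c)).Nonempty := by
    by_contra hne
    rw [Finset.not_nonempty_iff_eq_empty, Finset.filter_eq_empty_iff] at hne
    have := hU.2 L hLU hL.1 (by
      intro v hv u hu huv
      rcases hLn v hv u hu huv with h | rfl
      · exact h
      · exact absurd huv.symm (hne hv))
    exact hcL (this ▸ hcU)
  obtain ⟨z, hz, n, hpz⟩ : ∃ z ∈ Z0, ∃ n, PL G (U \ L) c z n := by
    apply exists_PL (by simp [hcU, hcL])
    intro K hK hcK hKcl
    have := hU.2 (K ∪ L) (Finset.union_subset (hK.trans Finset.sdiff_subset) hLU)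
      ⟨c, Finset.mem_union_left _ hcK⟩ (by
        intro u hu v hv huv
        by_cases hvL : v ∈ L
        · exact Finset.mem_union_right _ hvL
        rcases Finset.mem_union.1 hu with hu | hu
        · exact Finset.mem_union_left _ (hKcl u hu v (by simp [hv, hvL]) huv)
        · rcases hLn u hu v hv huv with h | rfl
          · exact absurd h hvL
          · exact Finset.mem_union_left _ hcK)
    obtain ⟨z, hz⟩ := hZne
    have hz' := hZ hz
    rw [← this, Finset.mem_union] at hz'
    rcases hz' with h | h
    · exact ⟨z, Finset.mem_inter.2 ⟨h, hz⟩⟩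
    · exact absurd hz (Finset.disjoint_left.1 hLZ h)
  obtain ⟨q, hq, hpq⟩ := hpz.toExit (hex z hz) (hX.symm.mono_left Finset.sdiff_subset)
  refine ⟨L, L.filter (G.Adj c), U \ L ∪ X0, n + e0 + 1, hLU, hL, Finset.filter_subset _ _, hZ1,
    ?_, ?_, by rw [Finset.union_comm], ?_, Or.inr ⟨c, by simp [hcU, hcL], hLn, hLZ, rfl⟩⟩
  -- a part of `L` cut off by a second vertex and missing `N(c)` would be a smaller choice of `L`
  · intro c' hc' K hK hKne hKcl
    by_contra hne
    rw [Finset.not_nonempty_iff_eq_empty] at hne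
    have hnc : ∀ v ∈ K, ¬ G.Adj c v := by
      intro v hv hcv
      have : v ∈ K ∩ L.filter (G.Adj c) := by
        simp [hv, hcv, Finset.mem_of_mem_erase (hK hv)]
      rw [hne] at this; simp at this
    obtain ⟨v, hv⟩ := hKne
    obtain ⟨K', hKK, hvK, hK', hKcl'⟩ := exists_comp G hv
    have hKL : K ⊆ L := hK.trans (Finset.erase_subset _ _)
    have hcK : c' ∉ K := fun h => Finset.notMem_erase c' L (hK h)
    have := hmin K' ⟨hKK.trans (hKL.trans hLU), c', hLU hc', fun h => hcK (hKK h), hK',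
      hLZ.mono_left (hKK.trans hKL), by
        intro v hv u hu huv
        rcases hLn v (hKL (hKK hv)) u hu huv with h | rfl
        · by_cases huc : u = c'
          · exact Or.inr huc
          · exact Or.inl (hKcl' v hv u (hKcl v (hKK hv) u (Finset.mem_erase.2 ⟨huc, h⟩) huv) huv)
        · exact absurd huv.symm (hnc v (hKK hv))⟩
    have hlt : K'.card < L.card := Finset.card_lt_card
      ⟨hKK.trans hKL, fun h => hcK (hKK (h hc'))⟩
    omega
  · intro z' hz'
    exact Or.inr ⟨c, q, n + e0, (Finset.mem_filter.1 hz').2.symm, hpq, hq, rfl⟩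
  · intro v hv
    have h1 : nd G v U ≤ nd G v (L ∪ {c}) := nd_le_of_subset (by
      intro u hu huv
      rcases hLn v hv u hu huv with h | h <;> simp [h])
    have h2 := nd_union_le G v L {c}
    rw [nd_singleton] at h2
    rw [ind_neg (Finset.disjoint_left.1 hLZ hv)]
    have h3 : ind (v ∈ L.filter (G.Adj c)) = ind (G.Adj v c) := by
      simp [hv, G.adj_comm c v]
    omega

/-- The induction step: `g` starts from `P` in `S` ending at any root in `R`, the induction hypothesis for
`k + 1 - g` in the smaller connected set `L` with terminals `N(R) ∩ L` and `Z`, and an exit of a common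
length from `Z` to `Q` through `X` combine to `k` admissible paths in `C`. -/
lemma step {C P Q L Z R S X : Finset V} {k g e m0 : ℕ} (ih : IH G C.card) (hL : Conn G L)
    (hLC : L ⊆ C) (hZ : Z ⊆ L) (hZne : Z.Nonempty)
    (hc : ∀ c ∈ L, ∀ K ⊆ L.erase c, K.Nonempty → Cl G (L.erase c) K →
      (K ∩ (nb G R L ∪ Z)).Nonempty)
    (hex : ∀ z ∈ Z, Exit G X Q z e)
    (hs : ∀ r ∈ R, ∀ j < g, ∃ p ∈ P, PL G S p r (m0 + 2 * j))
    (hnb : (nb G R L).Nonempty) (dSL : Disjoint S L) (dSX : Disjoint S X) (dLX : Disjoint L X)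
    (hSC : S ⊆ C) (hXC : X ⊆ C) (hg : 1 ≤ g) (hgk : g ≤ k)
    (deg : ∀ v ∈ L, 2 * (k + 1 - g) ≤ nd G v L + ind (v ∈ nb G R L) + ind (v ∈ Z)) :
    HasAP G C P Q k := by
  have hlt : L.card < C.card := by
    obtain ⟨v, hv⟩ := hnb
    obtain ⟨hvL, r, hr, hrv⟩ := mem_nb.1 hv
    obtain ⟨p, hp, hpr⟩ := hs r hr 0 (by omega)
    exact Finset.card_lt_card ⟨hLC, fun h =>
      Finset.disjoint_left.1 dSL hpr.right_mem (h (hSC hpr.right_mem))⟩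
  have h1 := ih L (nb G R L) Z (k + 1 - g) hlt
    (Good.of_conn hL (Finset.filter_subset _ _) hZ hnb hZne hc deg)
  have h2 := h1.extExit hex dLX
  have h3 : HasAP G (L ∪ X) (nb G R (L ∪ X)) Q (k + 1 - g) :=
    h2.mono subset_rfl (Finset.filter_subset_filter _ Finset.subset_union_left) subset_rfl le_rfl
  have h4 := h3.extStart hs (Finset.disjoint_union_right.2 ⟨dSL, dSX⟩) hg (by omega)
  exact h4.mono (Finset.union_subset hSC (Finset.union_subset hLC hXC)) subset_rfl subset_rfl
    (by omega)

/-! ### Separations by one vertex -/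

/-- An instance in which the reductions at a single vertex have been carried out: `C` is connected,
`k ≥ 2`, the theorem holds for smaller instances, and every part of `C` cut off by a vertex meets
both `P` and `Q`. -/
structure Strong (G : SimpleGraph V) (C P Q : Finset V) (k : ℕ) : Prop where
  good : Good G C P Q k
  conn : Conn G C
  two : 2 ≤ k
  ih : IH G C.card
  cP : ∀ c ∈ C, ∀ K ⊆ C.erase c, K.Nonempty → Cl G (C.erase c) K → (K ∩ P).Nonempty
  cQ : ∀ c ∈ C, ∀ K ⊆ C.erase c, K.Nonempty → Cl G (C.erase c) K → (K ∩ Q).Nonempty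

lemma Strong.symm {C P Q : Finset V} {k : ℕ} (h : Strong G C P Q k) : Strong G C Q P k :=
  ⟨h.good.symm, h.conn, h.two, h.ih, h.cQ, h.cP⟩

/-- All neighbours in `C` of vertices of `L` lie in `L ∪ T`. -/
def Nbd (G : SimpleGraph V) (C L T : Finset V) : Prop :=
  ∀ v ∈ L, ∀ u ∈ C, G.Adj v u → u ∈ L ∨ u ∈ T

lemma Nbd.nd_le {C L T : Finset V} (h : Nbd G C L T) {v : V} (hv : v ∈ L) :
    nd G v C ≤ nd G v L + nd G v T :=
  (nd_le_of_subset (fun u hu huv => Finset.mem_union.2 (h v hv u hu huv))).trans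
    (nd_union_le _ _ _ _)

lemma nb_subset {R L : Finset V} : nb G R L ⊆ L := Finset.filter_subset _ _

lemma nd_pair_le (v a c : V) : nd G v {a, c} ≤ ind (G.Adj v a) + ind (G.Adj v c) := by
  have := nd_union_le G v {a} {c}
  rwa [nd_singleton, nd_singleton] at this

lemma ind_nb {a v : V} {L : Finset V} (hv : v ∈ L) :
    ind (v ∈ nb G {a} L) = ind (G.Adj v a) := by
  congr 1
  simp [mem_nb, hv, G.adj_comm a v]

lemma Conn.disjoint {S U1 U2 : Finset V} (h2 : Conn G U2) (hS : U2 ⊆ S) (hcl : Cl G S U1)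
    {r : V} (hr : r ∈ U2) (hr1 : r ∉ U1) : Disjoint U1 U2 := by
  rw [Finset.disjoint_left]
  intro v hv1 hv2
  have := h2.2 (U1 ∩ U2) Finset.inter_subset_right ⟨v, by simp [hv1, hv2]⟩ (by
    intro u hu w hw huw
    rw [Finset.mem_inter] at hu ⊢
    exact ⟨hcl u hu.1 w (hS hw) huw, hw⟩)
  rw [← this] at hr
  exact hr1 (Finset.mem_inter.1 hr).1

lemma Strong.meetP {C P Q : Finset V} {k : ℕ} (h : Strong G C P Q k) {c : V} {K : Finset V}
    (hc : c ∈ C) (hK : K ⊆ C) (hcK : c ∉ K) (hne : K.Nonempty) (hn : Nbd G C K {c}) :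
    (K ∩ P).Nonempty := by
  refine h.cP c hc K (fun x hx => Finset.mem_erase.2 ⟨fun e => hcK (e ▸ hx), hK hx⟩) hne ?_
  intro u hu v hv huv
  rcases hn u hu v (Finset.mem_of_mem_erase hv) huv with h | h
  · exact h
  · exact absurd (Finset.mem_singleton.1 h) (Finset.ne_of_mem_erase hv)

lemma Strong.meetQ {C P Q : Finset V} {k : ℕ} (h : Strong G C P Q k) {c : V} {K : Finset V}
    (hc : c ∈ C) (hK : K ⊆ C) (hcK : c ∉ K) (hne : K.Nonempty) (hn : Nbd G C K {c}) :
    (K ∩ Q).Nonempty := h.symm.meetP hc hK hcK hne hn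

/-- A part of `C` separated by `a` contains a neighbour of `a`, since `C` is connected. -/
lemma Strong.attach {C P Q : Finset V} {k : ℕ} (h : Strong G C P Q k) {a : V} {K : Finset V}
    (ha : a ∈ C) (hK : K ⊆ C) (haK : a ∉ K) (hne : K.Nonempty) (hn : Nbd G C K {a}) :
    (nb G {a} K).Nonempty := by
  by_contra hc
  rw [Finset.not_nonempty_iff_eq_empty] at hc
  have := h.conn.2 K hK hne (by
    intro u hu v hv huv
    rcases hn u hu v hv huv with h | h
    · exact h
    · rw [Finset.mem_singleton] at h
      subst h
      have : u ∈ nb G {v} K := mem_nb.2 ⟨hu, v, by simp, huv.symm⟩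
      rw [hc] at this; simp at this)
  exact haK (this ▸ ha)

/-- Reduction at a single vertex: if some vertex cuts off a part of `C` missing `Q`, induction in an end
piece gives the conclusion. -/
lemma red {C P Q : Finset V} {k : ℕ} (hg : Good G C P Q k) (hC : Conn G C)
    (ih : IH G C.card) :
    (∀ c ∈ C, ∀ K ⊆ C.erase c, K.Nonempty → Cl G (C.erase c) K → (K ∩ Q).Nonempty) ∨
      HasAP G C P Q k := by
  have hQ : Q.Nonempty := (hg.hQ C subset_rfl hg.ne (fun _ _ v hv _ => hv)).mono
    Finset.inter_subset_right
  obtain ⟨L, Z, X, e, hLU, hL, hZL, hZne, hc, hex, hX, hdeg, hT⟩ :=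
    piece (G := G) (X0 := ∅) (Q := Q) (e0 := 0) hC hg.hQC hQ (fun z hz => Or.inl ⟨hz, rfl⟩)
      (Finset.disjoint_empty_left _)
  rcases hT with ⟨rfl, rfl⟩ | ⟨c, hcU, hLn, hLZ, rfl⟩
  · exact Or.inl hc
  right
  rw [Finset.mem_sdiff] at hcU
  rw [Finset.empty_union] at hX
  have hPL : (P ∩ L).Nonempty := by
    obtain ⟨v, hv⟩ := hg.hc c hcU.1 L
      (fun x hx => Finset.mem_erase.2 ⟨fun e => hcU.2 (e ▸ hx), hLU hx⟩) hL.1 (by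
        intro u hu v hv huv
        rcases hLn u hu v (Finset.mem_of_mem_erase hv) huv with h | h
        · exact h
        · exact absurd h (Finset.ne_of_mem_erase hv))
    rw [Finset.mem_inter, Finset.mem_union] at hv
    rcases hv.2 with h | h
    · exact ⟨v, by simp [h, hv.1]⟩
    · exact absurd h (Finset.disjoint_left.1 hLZ hv.1)
  have h1 := ih L (P ∩ L) (L.filter (G.Adj c)) k
    (Finset.card_lt_card ⟨hLU, fun h => hcU.2 (h hcU.1)⟩)
    (Good.of_conn hL Finset.inter_subset_right hZL hPL hZne (by
      intro c' hc' K hK hne hcl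
      exact (hc c' hc' K hK hne hcl).mono
        (Finset.inter_subset_inter_left Finset.subset_union_right)) (by
      intro v hv
      have h1 := hg.deg v (hLU hv)
      have h2 := hdeg v hv
      have : ind (v ∈ P ∩ L) = ind (v ∈ P) := by congr 1; simp [hv]
      omega))
  have h2 := h1.extExit hex (Finset.disjoint_sdiff.mono_right hX)
  exact h2.mono (Finset.union_subset hLU (hX.trans Finset.sdiff_subset))
    Finset.inter_subset_left subset_rfl le_rfl

/-- Admissible paths ending at neighbours of `a` become starts ending at `a`. -/
lemma HasAP.startOf {U P : Finset V} {a : V} {k : ℕ} (h : HasAP G U P (nb G {a} U) k)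
    (ha : a ∉ U) : ∃ m, ∀ r ∈ ({a} : Finset V), ∀ j < k, ∃ p ∈ P, PL G (U ∪ {a}) p r (m + 2 * j) := by
  obtain ⟨l, h⟩ := h
  refine ⟨l + 1, fun r hr j hj => ?_⟩
  rw [Finset.mem_singleton] at hr; subst hr
  obtain ⟨p, hp, q, hq, hpq⟩ := h j hj
  obtain ⟨_, r', hr', hrq⟩ := mem_nb.1 hq
  rw [Finset.mem_singleton] at hr'; subst hr'
  refine ⟨p, hp, ?_⟩
  have := hpq.join hrq.symm (PL.refl (Finset.mem_singleton_self r')) (by simpa using ha)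
  convert this using 1
  omega

/-- A connected part cut off by one vertex `a` carries `k - 1` admissible paths from `P` to the
neighbours of `a`: a vertex loses at most its edge to `y` by passing to this instance. -/
lemma Strong.cutAP {C P Q U : Finset V} {k : ℕ} {a : V} (h : Strong G C P Q k) (hU : Conn G U)
    (hUC : U ⊆ C) (ha : a ∈ C) (haU : a ∉ U) (hn : Nbd G C U {a}) :
    HasAP G U (P ∩ U) (nb G {a} U) (k - 1) := by
  apply h.ih _ _ _ _ (Finset.card_lt_card ⟨hUC, fun h => haU (h ha)⟩)
  apply Good.of_conn hU Finset.inter_subset_right nb_subset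
  · rw [Finset.inter_comm]; exact h.meetP ha hUC haU hU.1 hn
  · exact h.attach ha hUC haU hU.1 hn
  · intro c hc K hK hne hcl
    by_contra hm
    rw [Finset.not_nonempty_iff_eq_empty] at hm
    have hKU : K ⊆ U := hK.trans (Finset.erase_subset _ _)
    have hKn : ∀ v ∈ K, v ∉ P ∧ ¬ G.Adj v a := by
      intro v hv
      have : v ∉ K ∩ (P ∩ U ∪ nb G {a} U) := by rw [hm]; simp
      simpa [hv, hKU hv, mem_nb, G.adj_comm a v] using this
    obtain ⟨v, hv⟩ := h.meetP (hUC hc) (hKU.trans hUC)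
      (fun h => Finset.notMem_erase c U (hK h)) hne (by
        intro u hu v hv huv
        rcases hn u (hKU hu) v hv huv with h | h
        · by_cases hvc : v = c
          · simp [hvc]
          · exact Or.inl (hcl u hu v (by simp [hvc, h]) huv)
        · rw [Finset.mem_singleton] at h; subst h
          exact absurd huv (hKn u hu).2)
    rw [Finset.mem_inter] at hv
    exact (hKn v hv.1).1 hv.2
  · intro v hv
    have h1 := h.good.deg v (hUC hv)
    have h2 := hn.nd_le hv
    rw [nd_singleton] at h2
    rw [ind_nb hv]
    have : ind (v ∈ P ∩ U) = ind (v ∈ P) := by congr 1; simp [hv]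
    have := ind_le (v ∈ Q)
    omega

/-- If `C` has a cut vertex `a` and `k ≥ 3`, then the `k - 1` paths from `P` to `a` on one side and
the `k - 1` paths from `a` to `Q` on the other combine to `2(k - 1) - 1 ≥ k` admissible paths. -/
lemma Strong.r2' {C P Q L : Finset V} {k : ℕ} {a r : V} (h : Strong G C P Q k) (hk : 3 ≤ k)
    (hLC : L ⊆ C) (hLne : L.Nonempty) (ha : a ∈ C) (haL : a ∉ L) (hn : Nbd G C L {a})
    (hr : r ∈ C) (hrL : r ∉ L) (hra : r ≠ a) : HasAP G C P Q k := by
  obtain ⟨v, hv⟩ := hLne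
  obtain ⟨U1, hU1L, hvU1, hU1, hU1cl⟩ := exists_comp G hv
  obtain ⟨U2, hU2L, hrU2, hU2, hU2cl⟩ := exists_comp G (Finset.mem_erase.2 ⟨hra, hr⟩)
  have haU1 : a ∉ U1 := fun h => haL (hU1L h)
  have haU2 : a ∉ U2 := fun h => Finset.notMem_erase a C (hU2L h)
  have hn1 : Nbd G C U1 {a} := by
    intro u hu w hw huw
    rcases hn u (hU1L hu) w hw huw with h | h
    · exact Or.inl (hU1cl u hu w h huw)
    · exact Or.inr h
  have hn2 : Nbd G C U2 {a} := by
    intro u hu w hw huw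
    by_cases hwa : w = a
    · simp [hwa]
    · exact Or.inl (hU2cl u hu w (by simp [hwa, hw]) huw)
  have hd : Disjoint U1 U2 := hU2.disjoint (U1 := U1) hU2L (by
    intro u hu w hw huw
    rcases hn1 u hu w (Finset.mem_of_mem_erase hw) huw with h | h
    · exact h
    · exact absurd (Finset.mem_singleton.1 h) (Finset.ne_of_mem_erase hw)) hrU2
      (fun h => hrL (hU1L h))
  have hU2C := hU2L.trans (Finset.erase_subset _ _)
  obtain ⟨m, hm⟩ := (h.cutAP hU1 (hU1L.trans hLC) ha haU1 hn1).startOf haU1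
  have h2 := (h.symm.cutAP hU2 hU2C ha haU2 hn2).symm
  have h3 := h2.extStart hm (Finset.disjoint_union_left.2 ⟨hd, by simpa using haU2⟩)
    (by omega) (by omega)
  exact h3.mono (Finset.union_subset (Finset.union_subset (hU1L.trans hLC) (by simpa using ha))
    hU2C) Finset.inter_subset_left Finset.inter_subset_left (by omega)

/-- Let `{a, c}` separate a connected `L` that meets `P` and misses `Q`. Either `L` carries `k - 1`
admissible paths from `P` to the neighbours of `c`, or the conclusion holds outright. The second
case occurs when some `u ∈ L` cuts off from `L` a part `K1` missing both `P` and `N(c)`: then `K1` is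
attached only to `u` and `a`, and induction gives `k` admissible paths across it. -/
lemma Strong.r2side {C P Q L : Finset V} {k : ℕ} {a c : V} (h : Strong G C P Q k)
    (hL : Conn G L)
    (hLC : L ⊆ C) (ha : a ∈ C) (hc : c ∈ C) (haL : a ∉ L) (hcL : c ∉ L) (hac : a ≠ c)
    (hn : Nbd G C L {a, c}) (hLQ : Disjoint L Q) (hLP : (P ∩ L).Nonempty) :
    HasAP G C P Q k ∨ HasAP G L (P ∩ L) (nb G {c} L) (k - 1) := by
  have hnbc : (nb G {c} L).Nonempty := by
    by_contra hne
    rw [Finset.not_nonempty_iff_eq_empty] at hne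
    obtain ⟨v, hv⟩ := h.meetQ ha hLC haL hL.1 (by
      intro u hu w hw huw
      rcases hn u hu w hw huw with h | h
      · exact Or.inl h
      · rw [Finset.mem_insert, Finset.mem_singleton] at h
        rcases h with rfl | rfl
        · simp
        · have : u ∈ nb G {w} L := mem_nb.2 ⟨hu, w, by simp, huw.symm⟩
          rw [hne] at this; simp at this)
    rw [Finset.mem_inter] at hv
    exact Finset.disjoint_left.1 hLQ hv.1 hv.2
  by_cases hcc : ∀ u ∈ L, ∀ K ⊆ L.erase u, K.Nonempty → Cl G (L.erase u) K →
      (K ∩ (P ∩ L ∪ nb G {c} L)).Nonempty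
  · right
    apply h.ih _ _ _ _ (Finset.card_lt_card ⟨hLC, fun h => haL (h ha)⟩)
    apply Good.of_conn hL Finset.inter_subset_right nb_subset hLP hnbc hcc
    intro v hv
    have h1 := h.good.deg v (hLC hv)
    have h2 := hn.nd_le hv
    have h3 := nd_pair_le (G := G) v a c
    rw [ind_nb hv]
    have : ind (v ∈ P ∩ L) = ind (v ∈ P) := by congr 1; simp [hv]
    have := ind_neg (Finset.disjoint_left.1 hLQ hv)
    have := ind_le (G.Adj v a)
    omega
  left
  push Not at hcc
  obtain ⟨u, hu, K, hK, hne, hcl, hm⟩ := hcc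
  have hKL : K ⊆ L := hK.trans (Finset.erase_subset _ _)
  have huK : u ∉ K := fun h => Finset.notMem_erase u L (hK h)
  have hKn : ∀ v ∈ K, v ∉ P ∧ ¬ G.Adj v c := by
    intro v hv
    have : v ∉ K ∩ (P ∩ L ∪ nb G {c} L) := by rw [hm]; simp
    simpa [hv, hKL hv, mem_nb, G.adj_comm c v] using this
  obtain ⟨v, hv⟩ := hne
  obtain ⟨K1, hK1K, hvK1, hK1, hK1cl⟩ := exists_comp G hv
  have hK1L := hK1K.trans hKL
  have hK1C := hK1L.trans hLC
  have huC := hLC hu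
  have huK1 : u ∉ K1 := fun h => huK (hK1K h)
  have haK1 : a ∉ K1 := fun h => haL (hK1L h)
  have hn1 : Nbd G C K1 {u, a} := by
    intro s hs w hw hsw
    rcases hn s (hK1L hs) w hw hsw with h | h
    · by_cases hwu : w = u
      · simp [hwu]
      · exact Or.inl (hK1cl s hs w (hcl s (hK1K hs) w (by simp [hwu, h]) hsw) hsw)
    · rw [Finset.mem_insert, Finset.mem_singleton] at h
      rcases h with rfl | rfl
      · simp
      · exact absurd hsw (hKn s (hK1K hs)).2
  -- any subset of `K1` whose neighbourhood has at most one further vertex contradicts `cP`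
  have key : ∀ K' ⊆ K1, K'.Nonempty → ∀ t ∈ C, t ∉ K' → ¬ Nbd G C K' {t} := by
    intro K' hK' hne' t ht htK hn'
    obtain ⟨v, hv⟩ := h.meetP ht (hK'.trans hK1C) htK hne' hn'
    rw [Finset.mem_inter] at hv
    exact (hKn v (hK1K (hK' hv.1))).1 hv.2
  have hnbu : (nb G {u} K1).Nonempty := by
    by_contra hne
    rw [Finset.not_nonempty_iff_eq_empty] at hne
    refine key K1 subset_rfl hK1.1 a ha haK1 ?_
    intro s hs w hw hsw
    rcases hn1 s hs w hw hsw with h | h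
    · exact Or.inl h
    · rw [Finset.mem_insert, Finset.mem_singleton] at h
      rcases h with rfl | rfl
      · have : s ∈ nb G {w} K1 := mem_nb.2 ⟨hs, w, by simp, hsw.symm⟩
        rw [hne] at this; simp at this
      · simp
  have hnba : (nb G {a} K1).Nonempty := by
    by_contra hne
    rw [Finset.not_nonempty_iff_eq_empty] at hne
    refine key K1 subset_rfl hK1.1 u huC huK1 ?_
    intro s hs w hw hsw
    rcases hn1 s hs w hw hsw with h | h
    · exact Or.inl h
    · rw [Finset.mem_insert, Finset.mem_singleton] at h
      rcases h with rfl | rfl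
      · simp
      · have : s ∈ nb G {w} K1 := mem_nb.2 ⟨hs, w, by simp, hsw.symm⟩
        rw [hne] at this; simp at this
  have hAP : HasAP G K1 (nb G {u} K1) (nb G {a} K1) k := by
    apply h.ih _ _ _ _ (Finset.card_lt_card ⟨hK1C, fun h => haK1 (h ha)⟩)
    apply Good.of_conn hK1 nb_subset nb_subset hnbu hnba
    · intro c' hc' K' hK' hne' hcl'
      by_contra hm'
      rw [Finset.not_nonempty_iff_eq_empty] at hm'
      have hK'K : K' ⊆ K1 := hK'.trans (Finset.erase_subset _ _)
      refine key K' hK'K hne' c' (hK1C hc') (fun h => Finset.notMem_erase c' K1 (hK' h)) ?_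
      intro s hs w hw hsw
      have hs' : s ∉ K' ∩ (nb G {u} K1 ∪ nb G {a} K1) := by rw [hm']; simp
      rcases hn1 s (hK'K hs) w hw hsw with h | h
      · by_cases hwc : w = c'
        · simp [hwc]
        · exact Or.inl (hcl' s hs w (by simp [hwc, h]) hsw)
      · exfalso; apply hs'
        rw [Finset.mem_insert, Finset.mem_singleton] at h
        rcases h with rfl | rfl <;> simp [hs, mem_nb, hK'K hs, hsw.symm]
    · intro v hv
      have h1 := h.good.deg v (hK1C hv)
      have h2 := hn1.nd_le hv
      have h3 := nd_pair_le (G := G) v u a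
      rw [ind_nb hv, ind_nb hv]
      have := ind_neg (hKn v (hK1K hv)).1
      have := ind_neg (Finset.disjoint_left.1 hLQ (hK1L hv))
      omega
  -- connect `u` to `P` inside `L` and `a` to `Q` outside `L`
  obtain ⟨p, hp, n, hpn⟩ : ∃ p ∈ P, ∃ n, PL G (L \ K1) u p n := by
    apply exists_PL (by simp [hu, huK1])
    intro K' hK' huK' hcl'
    have := hL.2 (K' ∪ K1) (Finset.union_subset (hK'.trans Finset.sdiff_subset) hK1L)
      ⟨u, Finset.mem_union_left _ huK'⟩ (by
        intro s hs w hw hsw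
        by_cases hwK : w ∈ K1
        · exact Finset.mem_union_right _ hwK
        rcases Finset.mem_union.1 hs with hs | hs
        · exact Finset.mem_union_left _ (hcl' s hs w (by simp [hw, hwK]) hsw)
        · rcases hn1 s hs w (hLC hw) hsw with h | h
          · exact absurd h hwK
          · rw [Finset.mem_insert, Finset.mem_singleton] at h
            rcases h with rfl | rfl
            · exact Finset.mem_union_left _ huK'
            · exact absurd hw haL)
    obtain ⟨v, hv⟩ := hLP
    rw [← this] at hv
    simp only [Finset.mem_inter, Finset.mem_union] at hv
    rcases hv.2 with h | h
    · exact ⟨v, by simp [h, hv.1]⟩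
    · exact absurd hv.1 (hKn v (hK1K h)).1
  obtain ⟨q, hq, n', hqn⟩ : ∃ q ∈ Q, ∃ n, PL G (C \ L) a q n := by
    apply exists_PL (by simp [ha, haL])
    intro K' hK' haK' hcl'
    obtain ⟨v, hv⟩ := h.cQ c hc ((K' ∪ L).erase c)
      (Finset.erase_subset_erase _ (Finset.union_subset (hK'.trans Finset.sdiff_subset) hLC))
      ⟨a, by simp [hac, haK']⟩ (by
        intro s hs w hw hsw
        rw [Finset.mem_erase, Finset.mem_union] at *
        refine ⟨hw.1, ?_⟩
        by_cases hwL : w ∈ L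
        · exact Or.inr hwL
        rcases hs.2 with hs | hs
        · exact Or.inl (hcl' s hs w (by simp [hw, hwL]) hsw)
        · rcases hn s hs w hw.2 hsw with h | h
          · exact Or.inr h
          · rw [Finset.mem_insert, Finset.mem_singleton] at h
            rcases h with rfl | rfl
            · exact Or.inl haK'
            · exact absurd rfl hw.1)
    simp only [Finset.mem_inter, Finset.mem_erase, Finset.mem_union] at hv
    rcases hv.1.2 with h | h
    · exact ⟨v, by simp [h, hv.2]⟩
    · exact absurd hv.2 (Finset.disjoint_left.1 hLQ h)
  have h2 := hAP.extExit (X := C \ L) (Q := Q) (e := n' + 1) (by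
    intro z hz
    obtain ⟨_, r, hr, hrz⟩ := mem_nb.1 hz
    rw [Finset.mem_singleton] at hr; subst hr
    exact Or.inr ⟨r, q, n', hrz.symm, hqn, hq, rfl⟩) (Finset.disjoint_sdiff.mono_left hK1L)
  have h3 : HasAP G (K1 ∪ C \ L) (nb G {u} (K1 ∪ C \ L)) Q k :=
    h2.mono subset_rfl (Finset.filter_subset_filter _ Finset.subset_union_left) subset_rfl le_rfl
  have h4 := h3.extStart (S := L \ K1) (P := P) (g := 1) (m := n) (by
    intro r hr j hj
    rw [Finset.mem_singleton] at hr; subst hr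
    exact ⟨p, hp, by rw [show n + 2 * j = n by omega]; exact hpn.symm⟩)
    (Finset.disjoint_union_right.2 ⟨Finset.sdiff_disjoint,
      Finset.disjoint_sdiff.mono_left Finset.sdiff_subset⟩) le_rfl (by have := h.two; omega)
  exact h4.mono (Finset.union_subset (Finset.sdiff_subset.trans hLC)
    (Finset.union_subset hK1C Finset.sdiff_subset)) subset_rfl subset_rfl (by omega)

/-! ### Separations by two vertices -/

/-- The induction step with `k - 1` starts through `L` ending at `c`; the piece `L'` only has to provide
two lengths, so degree `4` suffices there. -/
lemma Strong.finish {C P Q L L' Z X : Finset V} {k e : ℕ} {c : V} (h : Strong G C P Q k)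
    (hk : 3 ≤ k) (hLC : L ⊆ C) (hc : c ∈ C) (hcL : c ∉ L)
    (hAP : HasAP G L (P ∩ L) (nb G {c} L) (k - 1)) (hL' : Conn G L') (hLC' : L' ⊆ C)
    (hZ : Z ⊆ L') (hZne : Z.Nonempty)
    (hcc : ∀ c' ∈ L', ∀ K ⊆ L'.erase c', K.Nonempty → Cl G (L'.erase c') K →
      (K ∩ (nb G {c} L' ∪ Z)).Nonempty)
    (hex : ∀ z ∈ Z, Exit G X Q z e) (hnb : (nb G {c} L').Nonempty)
    (d1 : Disjoint (L ∪ {c}) L') (d2 : Disjoint (L ∪ {c}) X) (d3 : Disjoint L' X) (hXC : X ⊆ C)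
    (deg : ∀ v ∈ L', 4 ≤ nd G v L' + ind (G.Adj v c) + ind (v ∈ Z)) : HasAP G C P Q k := by
  obtain ⟨m, hm⟩ := hAP.startOf hcL
  have h1 := step (P := P) h.ih hL' hLC' hZ hZne hcc hex (k := k) (g := k - 1) (m0 := m)
    (fun r hr j hj => by
      obtain ⟨p, hp, hpr⟩ := hm r hr j hj
      exact ⟨p, Finset.mem_of_mem_inter_left hp, hpr⟩) hnb d1 d2 d3
    (Finset.union_subset hLC (by simpa using hc)) hXC (by omega) (by omega) (by
      intro v hv
      have := deg v hv
      rw [ind_nb hv]; omega)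
  exact h1

lemma nbd_single {C L : Finset V} {a c : V} (hn : Nbd G C L {a, c})
    (hne : ¬ (nb G {c} L).Nonempty) : Nbd G C L {a} := by
  rw [Finset.not_nonempty_iff_eq_empty] at hne
  intro s hs w hw hsw
  rcases hn s hs w hw hsw with h | h
  · exact Or.inl h
  · rw [Finset.mem_insert, Finset.mem_singleton] at h
    rcases h with rfl | rfl
    · simp
    · have : s ∈ nb G {w} L := mem_nb.2 ⟨hs, w, by simp, hsw.symm⟩
      rw [hne] at this; simp at this

lemma Nbd.swap {C L : Finset V} {a c : V} (hn : Nbd G C L {a, c}) : Nbd G C L {c, a} := by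
  rwa [Finset.pair_comm]

/-- If two vertices `a`, `c` separate a connected `L` that meets `P` and misses `Q` from at least one
further vertex `r`, and `k ≥ 3`, the conclusion holds. By `Strong.r2side` there are `k - 1` starts
through `L` ending at `a` and `k - 1` ending at `c`; a component beyond the separation supplies the
remaining two lengths. -/
lemma Strong.r2 {C P Q L : Finset V} {k : ℕ} {a c r : V} (h : Strong G C P Q k) (hk : 3 ≤ k)
    (hL : Conn G L)
    (hLC : L ⊆ C) (ha : a ∈ C) (hc : c ∈ C) (haL : a ∉ L) (hcL : c ∉ L) (hac : a ≠ c)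
    (hn : Nbd G C L {a, c}) (hLQ : Disjoint L Q) (hLP : (P ∩ L).Nonempty)
    (hr : r ∈ C) (hrL : r ∉ L) (hra : r ≠ a) (hrc : r ≠ c) : HasAP G C P Q k := by
  rcases h.r2side hL hLC ha hc haL hcL hac hn hLQ hLP with hdone | hAPc
  · exact hdone
  rcases h.r2side hL hLC hc ha hcL haL hac.symm hn.swap hLQ hLP with hdone | hAPa
  · exact hdone
  -- the right-hand part: a component `M` of what is left
  have comp : ∀ s ∈ C, s ∉ L → s ≠ a → s ≠ c → HasAP G C P Q k ∨ ∃ M, s ∈ M ∧ M ⊆ C ∧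
      Conn G M ∧ a ∉ M ∧ c ∉ M ∧ Disjoint L M ∧ Nbd G C M {a, c} ∧ (nb G {a} M).Nonempty ∧
      (nb G {c} M).Nonempty := by
    intro s hs hsL hsa hsc
    obtain ⟨M, hMS, hsM, hM, hMcl⟩ := exists_comp G (S := (C \ L) \ {a, c})
      (v := s) (by simp [hs, hsL, hsa, hsc])
    have hMC : M ⊆ C := hMS.trans (Finset.sdiff_subset.trans Finset.sdiff_subset)
    have haM : a ∉ M := fun h => by simpa using hMS h
    have hcM : c ∉ M := fun h => by simpa using hMS h
    have hd : Disjoint L M := Finset.disjoint_sdiff.mono_right (hMS.trans Finset.sdiff_subset)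
    have hnM : Nbd G C M {a, c} := by
      intro u hu w hw huw
      by_cases hwT : w ∈ ({a, c} : Finset V)
      · exact Or.inr hwT
      · refine Or.inl (hMcl u hu w (Finset.mem_sdiff.2 ⟨Finset.mem_sdiff.2 ⟨hw, ?_⟩, hwT⟩) huw)
        intro hwL
        rcases hn w hwL u (hMC hu) huw.symm with h | h
        · exact Finset.disjoint_left.1 hd h hu
        · rw [Finset.mem_insert, Finset.mem_singleton] at h
          rcases h with rfl | rfl <;> contradiction
    by_cases h1 : (nb G {a} M).Nonempty
    · by_cases h2 : (nb G {c} M).Nonempty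
      · exact Or.inr ⟨M, hsM, hMC, hM, haM, hcM, hd, hnM, h1, h2⟩
      · exact Or.inl (h.r2' hk hMC hM.1 ha haM (nbd_single hnM h2) hc hcM hac.symm)
    · exact Or.inl (h.r2' hk hMC hM.1 hc hcM (nbd_single hnM.swap h1) ha haM hac)
  -- either a component beyond the separation meets `Q`, or `Q ⊆ {a, c}` and `c` is the exit
  by_cases hQ : ∃ s ∈ Q, s ∉ L ∧ s ≠ a ∧ s ≠ c
  · obtain ⟨s, hsQ, hsL, hsa, hsc⟩ := hQ
    rcases comp s (h.good.hQC hsQ) hsL hsa hsc with hdone | ⟨M, hsM, hMC, hM, haM, hcM, hd, hnM, -, -⟩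
    · exact hdone
    obtain ⟨L', Z, X, e, hLU, hL', hZL, hZne, hcc, hex, hX, hdeg, hT⟩ :=
      piece (G := G) (X0 := ∅) (Q := Q) (e0 := 0) hM (Finset.inter_subset_right (s₁ := Q))
        ⟨s, by simp [hsQ, hsM]⟩ (fun z hz => Or.inl ⟨Finset.mem_of_mem_inter_left hz, rfl⟩)
        (Finset.disjoint_empty_left _)
    rw [Finset.empty_union] at hX
    have hLC' := hLU.trans hMC
    have haL' : a ∉ L' := fun h => haM (hLU h)
    have hcL' : c ∉ L' := fun h => hcM (hLU h)
    have hXM : X ⊆ M := hX.trans Finset.sdiff_subset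
    have hdeg' : ∀ v ∈ L', 2 * k ≤ nd G v L' + ind (v ∈ Z) + ind (G.Adj v a) + ind (G.Adj v c)
        + 1 := by
      intro v hv
      have h1 := h.good.deg v (hLC' hv)
      have h2 := hnM.nd_le (hLU hv)
      have h3 := nd_pair_le (G := G) v a c
      have h4 := hdeg v hv
      have : ind (v ∈ Q ∩ M) = ind (v ∈ Q) := by congr 1; simp [hLU hv]
      have := ind_le (v ∈ P)
      omega
    have hdX : Disjoint L' X := Finset.disjoint_sdiff.mono_right hX
    by_cases h1 : (nb G {c} L').Nonempty
    · refine h.finish hk hLC hc hcL hAPc hL' hLC' hZL hZne ?_ hex h1 ?_ ?_ hdX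
        (hXM.trans hMC) ?_
      · intro c' hc' K hK hne hcl
        exact (hcc c' hc' K hK hne hcl).mono
          (Finset.inter_subset_inter_left Finset.subset_union_right)
      · exact Finset.disjoint_union_left.2 ⟨hd.mono_right hLU, by simpa using hcL'⟩
      · exact Finset.disjoint_union_left.2 ⟨hd.mono_right hXM, by simpa using fun h => hcM (hXM h)⟩
      · intro v hv
        have := hdeg' v hv
        have := ind_le (G.Adj v a)
        omega
    by_cases h2 : (nb G {a} L').Nonempty
    · refine h.finish hk hLC ha haL hAPa hL' hLC' hZL hZne ?_ hex h2 ?_ ?_ hdX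
        (hXM.trans hMC) ?_
      · intro c' hc' K hK hne hcl
        exact (hcc c' hc' K hK hne hcl).mono
          (Finset.inter_subset_inter_left Finset.subset_union_right)
      · exact Finset.disjoint_union_left.2 ⟨hd.mono_right hLU, by simpa using haL'⟩
      · exact Finset.disjoint_union_left.2 ⟨hd.mono_right hXM, by simpa using fun h => haM (hXM h)⟩
      · intro v hv
        have := hdeg' v hv
        have := ind_le (G.Adj v c)
        omega
    -- `L'` sees neither `a` nor `c`
    exfalso
    have hna : ∀ v ∈ L', ¬ G.Adj v a := fun v hv hva => h2 ⟨v, mem_nb.2 ⟨hv, a, by simp, hva.symm⟩⟩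
    have hnc : ∀ v ∈ L', ¬ G.Adj v c := fun v hv hva => h1 ⟨v, mem_nb.2 ⟨hv, c, by simp, hva.symm⟩⟩
    have hM' : ∀ v ∈ L', ∀ u ∈ C, G.Adj v u → u ∈ M := by
      intro v hv u hu huv
      rcases hnM v (hLU hv) u hu huv with h | h
      · exact h
      · rw [Finset.mem_insert, Finset.mem_singleton] at h
        rcases h with rfl | rfl
        · exact absurd huv (hna v hv)
        · exact absurd huv (hnc v hv)
    rcases hT with ⟨rfl, rfl⟩ | ⟨c', hcU, hLn, hLZ, rfl⟩
    · have := h.conn.2 L' hLC' hL'.1 hM'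
      exact haL' (this ▸ ha)
    · rw [Finset.mem_sdiff] at hcU
      obtain ⟨v, hv⟩ := h.meetQ (hMC hcU.1) hLC' hcU.2 hL'.1 (by
        intro v hv u hu huv
        rcases hLn v hv u (hM' v hv u hu huv) huv with h | h
        · exact Or.inl h
        · simp [h])
      rw [Finset.mem_inter] at hv
      exact Finset.disjoint_left.1 hLZ hv.1 (by simp [hv.2, hLU hv.1])
  · push Not at hQ
    have hQac : ∀ s ∈ Q, s ≠ a → s = c := fun s hs hsa =>
      hQ s hs (fun h => Finset.disjoint_left.1 hLQ h hs) hsa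
    have hcQ : c ∈ Q := by
      obtain ⟨v, hv⟩ := h.cQ a ha (C.erase a) subset_rfl ⟨c, by simp [hc, hac.symm]⟩
        (fun _ _ v hv _ => hv)
      rw [Finset.mem_inter, Finset.mem_erase] at hv
      rw [← hQac v hv.2 hv.1.1]; exact hv.2
    rcases comp r hr hrL hra hrc with hdone | ⟨M, hrM, hMC, hM, haM, hcM, hd, hnM, hma, hmc⟩
    · exact hdone
    have hMQ : ∀ v ∈ M, v ∉ Q := by
      intro v hv hvQ
      by_cases hva : v = a
      · exact haM (hva ▸ hv)
      · exact hcM (hQac v hvQ hva ▸ hv)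
    refine h.finish (X := {c}) (e := 1) hk hLC ha haL hAPa hM hMC (nb_subset (R := {c})) hmc ?_ ?_
      hma ?_ ?_ (by simpa using hcM) (by simpa using hc) ?_
    · intro u hu K hK hne hcl
      by_contra hm
      rw [Finset.not_nonempty_iff_eq_empty] at hm
      have hKM : K ⊆ M := hK.trans (Finset.erase_subset _ _)
      obtain ⟨v, hv⟩ := h.meetQ (hMC hu) (hKM.trans hMC)
        (fun h => Finset.notMem_erase u M (hK h)) hne (by
          intro s hs w hw hsw
          have hs' : s ∉ K ∩ (nb G {a} M ∪ nb G {c} M) := by rw [hm]; simp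
          rcases hnM s (hKM hs) w hw hsw with h | h
          · by_cases hwu : w = u
            · simp [hwu]
            · exact Or.inl (hcl s hs w (by simp [hwu, h]) hsw)
          · exfalso; apply hs'
            rw [Finset.mem_insert, Finset.mem_singleton] at h
            rcases h with rfl | rfl <;> simp [hs, mem_nb, hKM hs, hsw.symm])
      rw [Finset.mem_inter] at hv
      exact hMQ v (hKM hv.1) hv.2
    · intro z hz
      obtain ⟨_, r, hr, hrz⟩ := mem_nb.1 hz
      rw [Finset.mem_singleton] at hr; subst hr
      exact Or.inr ⟨r, r, 0, hrz.symm, PL.refl (by simp), hcQ, rfl⟩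
    · exact Finset.disjoint_union_left.2 ⟨hd, by simpa using haM⟩
    · simp [hcL, hac.symm]
    · intro v hv
      have h1 := h.good.deg v (hMC hv)
      have h2 := hnM.nd_le hv
      have h3 := nd_pair_le (G := G) v a c
      rw [ind_nb hv]
      have := ind_neg (hMQ v hv)
      have := ind_le (v ∈ P)
      omega

/-! ### Starting from a complete bipartite subgraph -/

/-- The core argument. Let `A1`, `B1` be the sides of a complete bipartite subgraph with `B1 ⊆ P` and
`|B1| > |A1|`, and let `U` be a connected set disjoint from it in which the vertices of `Z0` have
exits of a common length. The bounds `b1`, `b2` limit how much degree a vertex of `U` spends on the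
subgraph and on `x`. The alternative `alt` says where the exits start: at the vertices of `Q` in `U`,
or at the neighbours of one further vertex `w`, with `U` disjoint from `Q`. -/
lemma Strong.gen {C P Q A1 B1 U Z0 X0 : Finset V} {k e0 : ℕ} (h : Strong G C P Q k)
    (hAC : A1 ⊆ C) (hBC : B1 ⊆ C) (hBP : B1 ⊆ P) (hAB : ∀ a ∈ A1, ∀ b ∈ B1, G.Adj a b)
    (dAB : Disjoint A1 B1) (hN : A1.card + 1 ≤ B1.card) (hNk : A1.card + 1 ≤ k)
    (hk3 : A1.card = 1 → 3 ≤ k) (hU : Conn G U) (hUC : U ⊆ C) (dUA : Disjoint U A1)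
    (dUB : Disjoint U B1) (hZ0 : Z0 ⊆ U) (hZ0ne : Z0.Nonempty)
    (b1 : ∀ v ∈ U, ind (v ∈ P) + nd G v A1 ≤ A1.card) (b2 : ∀ v ∈ U, nd G v B1 ≤ A1.card + 1)
    (hex : ∀ z ∈ Z0, Exit G X0 Q z e0) (hXC : X0 ⊆ C) (dXU : Disjoint X0 U)
    (dXA : Disjoint X0 A1) (dXB : Disjoint X0 B1)
    (alt : (Z0 = Q ∩ U ∧ Nbd G C U (A1 ∪ B1)) ∨ ∃ w ∈ C, w ∉ U ∧ w ∉ A1 ∧ w ∉ B1 ∧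
      Z0 = nb G {w} U ∧ Disjoint U Q ∧ Nbd G C U (A1 ∪ B1 ∪ {w})) : HasAP G C P Q k := by
  obtain ⟨L, Z, X, e, hLU, hL, hZL, hZne, hcc, hexL, hX, hdeg, hT⟩ :=
    piece (G := G) hU hZ0 hZ0ne hex dXU
  have hLC := hLU.trans hUC
  have hXC' : X ⊆ C := hX.trans (Finset.union_subset hXC (Finset.sdiff_subset.trans hUC))
  have dXA' : Disjoint A1 X := (Finset.disjoint_union_right.2
    ⟨dXA.symm, dUA.symm.mono_right Finset.sdiff_subset⟩).mono_right hX
  have dXB' : Disjoint B1 X := (Finset.disjoint_union_right.2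
    ⟨dXB.symm, dUB.symm.mono_right Finset.sdiff_subset⟩).mono_right hX
  have dLX : Disjoint L X := (Finset.disjoint_union_right.2
    ⟨dXU.symm.mono_left hLU, Finset.disjoint_sdiff⟩).mono_right hX
  have dSX : Disjoint (A1 ∪ B1) X := Finset.disjoint_union_left.2 ⟨dXA', dXB'⟩
  have dSL : Disjoint (A1 ∪ B1) L := Finset.disjoint_union_left.2
    ⟨dUA.symm.mono_right hLU, dUB.symm.mono_right hLU⟩
  have hSC : A1 ∪ B1 ⊆ C := Finset.union_subset hAC hBC
  -- in either alternative, the edges to `y`, to `w` and to a cut vertex of `U` are absorbed in `Z`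
  have D : ∀ v ∈ L, 2 * k ≤ nd G v L + ind (v ∈ Z) + nd G v A1 + nd G v B1 + ind (v ∈ P) := by
    intro v hv
    have h1 := h.good.deg v (hLC hv)
    have h2 := hdeg v hv
    rcases alt with ⟨rfl, hn⟩ | ⟨w, hwC, hwU, hwA, hwB, rfl, hUQ, hn⟩
    · have h3 := hn.nd_le (hLU hv)
      have h4 := nd_union_le G v A1 B1
      have : ind (v ∈ Q ∩ U) = ind (v ∈ Q) := by congr 1; simp [hLU hv]
      omega
    · have h3 := hn.nd_le (hLU hv)
      have h4 := nd_union_le G v (A1 ∪ B1) {w}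
      have h5 := nd_union_le G v A1 B1
      rw [nd_singleton] at h4
      rw [ind_nb (hLU hv)] at h2
      have := ind_neg (Finset.disjoint_left.1 hUQ (hLU hv))
      omega
  -- outside the core, `L` is attached to at most one vertex, and to none unless it misses `Q`
  have J : Nbd G C L (A1 ∪ B1) ∨ ∃ c ∈ C, c ∉ L ∧ c ∉ A1 ∧ c ∉ B1 ∧ Disjoint L Q ∧
      Nbd G C L (A1 ∪ B1 ∪ {c}) := by
    rcases hT with ⟨rfl, rfl⟩ | ⟨c, hc, hLn, hLZ, -⟩
    · rcases alt with ⟨-, hn⟩ | ⟨w, hwC, hwU, hwA, hwB, -, hUQ, hn⟩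
      · exact Or.inl hn
      · exact Or.inr ⟨w, hwC, hwU, hwA, hwB, hUQ, hn⟩
    · rw [Finset.mem_sdiff] at hc
      refine Or.inr ⟨c, hUC hc.1, hc.2, Finset.disjoint_left.1 dUA hc.1,
        Finset.disjoint_left.1 dUB hc.1, ?_, ?_⟩
      · rcases alt with ⟨rfl, -⟩ | ⟨w, -, -, -, -, -, hUQ, -⟩
        · rw [Finset.disjoint_left] at hLZ ⊢
          intro v hv hvQ
          exact hLZ hv (by simp [hvQ, hLU hv])
        · exact hUQ.mono_left hLU
      · intro v hv u hu huv
        by_cases huU : u ∈ U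
        · rcases hLn v hv u huU huv with h | h
          · exact Or.inl h
          · simp [h]
        · right
          rcases alt with ⟨-, hn⟩ | ⟨w, -, -, -, -, rfl, -, hn⟩
          · rcases hn v (hLU hv) u hu huv with h | h
            · exact absurd h huU
            · exact Finset.mem_union_left _ h
          · rcases hn v (hLU hv) u hu huv with h | h
            · exact absurd h huU
            · rcases Finset.mem_union.1 h with h | h
              · exact Finset.mem_union_left _ h
              · rw [Finset.mem_singleton] at h; subst h
                exact absurd (mem_nb.2 ⟨hLU hv, u, by simp, huv.symm⟩)
                  (Finset.disjoint_left.1 hLZ hv)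
  have hccR : ∀ R : Finset V, ∀ c ∈ L, ∀ K ⊆ L.erase c, K.Nonempty → Cl G (L.erase c) K →
      (K ∩ (nb G R L ∪ Z)).Nonempty := fun R c hc K hK hne hcl =>
    (hcc c hc K hK hne hcl).mono (Finset.inter_subset_inter_left Finset.subset_union_right)
  -- enter `L` from `B1` with `|A1| + 1` starts if possible
  by_cases hB : (nb G B1 L).Nonempty
  · refine step (P := P) (S := A1 ∪ B1) (g := A1.card + 1) (m0 := 0) h.ih hL hLC hZL hZne
      (hccR B1) hexL ?_ hB dSL dSX dLX hSC hXC' (by omega) hNk ?_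
    · intro r hr j hj
      obtain ⟨b, hb, hp⟩ := bip_even (G := G) j A1 B1 dAB hAB r hr (by omega) (by omega)
      exact ⟨b, hBP hb, by simpa using hp⟩
    · intro v hv
      have h1 := D v hv
      have h2 := b1 v (hLU hv)
      have h3 : nd G v B1 ≤ A1.card + ind (v ∈ nb G B1 L) := by
        by_cases hvB : v ∈ nb G B1 L
        · rw [ind_pos hvB]; exact b2 v (hLU hv)
        · rw [nd_eq_zero]
          · omega
          · intro u hu huv
            exact hvB (mem_nb.2 ⟨hv, u, hu, huv.symm⟩)
      omega
  have hB0 : ∀ v ∈ L, ∀ u ∈ B1, ¬ G.Adj v u := fun v hv u hu huv =>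
    hB ⟨v, mem_nb.2 ⟨hv, u, hu, huv.symm⟩⟩
  obtain ⟨b, hb⟩ : B1.Nonempty := Finset.card_pos.1 (by omega)
  have hbL : b ∉ L := fun hbL2 => Finset.disjoint_left.1 dUB (hLU hbL2) hb
  -- otherwise enter from `A1` with `|A1|` starts; this loses too much degree only when `|A1| = 1` and
  -- `L` meets `P`, and then `A1` and the vertex from `J` separate `L`
  by_cases hA : (nb G A1 L).Nonempty
  · by_cases hN2 : 2 ≤ A1.card ∨ Disjoint L P
    · obtain ⟨a0, ha0⟩ : A1.Nonempty := by
        obtain ⟨v, hv⟩ := hA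
        obtain ⟨_, r, hr, _⟩ := mem_nb.1 hv
        exact ⟨r, hr⟩
      have hpos := Finset.card_pos.2 ⟨a0, ha0⟩
      refine step (P := P) (S := A1 ∪ B1) (g := A1.card) (m0 := 1) h.ih hL hLC hZL hZne
        (hccR A1) hexL ?_ hA dSL dSX dLX hSC hXC' (by omega) (by omega) ?_
      · intro r hr j hj
        obtain ⟨b, hb, hp⟩ := bip_odd (G := G) j A1 B1 dAB hAB r hr (by omega) (by omega)
        exact ⟨b, hBP hb, hp⟩
      · intro v hv
        have h1 := D v hv
        have h2 := b1 v (hLU hv)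
        have h3 := nd_eq_zero (hB0 v hv)
        rcases hN2 with hN2 | hLP
        · omega
        · have h4 := ind_neg (Finset.disjoint_left.1 hLP hv)
          have h5 : nd G v A1 ≤ A1.card - 1 + ind (v ∈ nb G A1 L) := by
            by_cases hvA : v ∈ nb G A1 L
            · rw [ind_pos hvA]; omega
            · rw [nd_eq_zero]
              · omega
              · intro u hu huv
                exact hvA (mem_nb.2 ⟨hv, u, hu, huv.symm⟩)
          omega
    · push Not at hN2
      obtain ⟨hN1, hLP⟩ := hN2
      obtain ⟨p, hpL, hpP⟩ := Finset.not_disjoint_iff.1 hLP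
      have hN1' : A1.card = 1 := by
        obtain ⟨v, hv⟩ := hA
        obtain ⟨_, r, hr, _⟩ := mem_nb.1 hv
        have := Finset.card_pos.2 ⟨r, hr⟩
        omega
      obtain ⟨a, rfl⟩ := Finset.card_eq_one.1 hN1'
      have haC : a ∈ C := by simpa using hAC
      have haL : a ∉ L := fun hL' => by
        have := Finset.disjoint_left.1 dUA (hLU hL'); simp at this
      have hba : b ≠ a := fun hba => Finset.disjoint_left.1 dAB
        (show b ∈ ({a} : Finset V) by simp [hba]) hb
      rcases J with hn | ⟨c, hcC, hcL, hcA, hcB, hLQ, hn⟩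
      · refine h.r2' (hk3 hN1') hLC hL.1 haC haL ?_ (hBC hb) hbL hba
        intro v hv u hu huv
        rcases hn v hv u hu huv with h | h
        · exact Or.inl h
        rcases Finset.mem_union.1 h with h | h
        · exact Or.inr h
        · exact absurd huv (hB0 v hv u h)
      · refine h.r2 (a := a) (c := c) (hk3 hN1') hL hLC haC hcC haL hcL
          (fun hac => hcA (by simp [hac])) ?_ hLQ ⟨p, by simp [hpL, hpP]⟩ (hBC hb) hbL hba
          (fun hbc => hcB (hbc ▸ hb))
        intro v hv u hu huv
        rcases hn v hv u hu huv with h | h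
        · exact Or.inl h
        rcases Finset.mem_union.1 h with h | h
        · rcases Finset.mem_union.1 h with h | h
          · right; rw [Finset.mem_singleton] at h; simp [h]
          · exact absurd huv (hB0 v hv u h)
        · right; rw [Finset.mem_singleton] at h; simp [h]
  exfalso
  have hA0 : ∀ v ∈ L, ∀ u ∈ A1, ¬ G.Adj v u := fun v hv u hu huv =>
    hA ⟨v, mem_nb.2 ⟨hv, u, hu, huv.symm⟩⟩
  rcases J with hn | ⟨c, hcC, hcL, -, -, hLQ, hn⟩
  · have := h.conn.2 L hLC hL.1 (by
      intro v hv u hu huv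
      rcases hn v hv u hu huv with h | h
      · exact h
      rcases Finset.mem_union.1 h with h | h
      · exact absurd huv (hA0 v hv u h)
      · exact absurd huv (hB0 v hv u h))
    exact hbL (this ▸ hBC hb)
  · obtain ⟨v, hv⟩ := h.meetQ hcC hLC hcL hL.1 (by
      intro v hv u hu huv
      rcases hn v hv u hu huv with h | h
      · exact Or.inl h
      rcases Finset.mem_union.1 h with h | h
      · rcases Finset.mem_union.1 h with h | h
        · exact absurd huv (hA0 v hv u h)
        · exact absurd huv (hB0 v hv u h)
      · exact Or.inr h)
    rw [Finset.mem_inter] at hv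
    exact Finset.disjoint_left.1 hLQ hv.1 hv.2

/-! ### Maximum cores -/

/-- The vertices of `P` adjacent to every vertex of `A`. -/
def Bs (G : SimpleGraph V) (P A : Finset V) : Finset V := P.filter (fun b => ∀ a ∈ A, G.Adj a b)

/-- A maximum core: a set `A` of largest size among those having at least `|A| + 1` common neighbours
in `P`. Together with `Bs G P A` it spans a complete bipartite graph. -/
structure MaxCore (G : SimpleGraph V) (C P A : Finset V) : Prop where
  sub : A ⊆ C
  card : A.card + 1 ≤ (Bs G P A).card
  max : ∀ A' ⊆ C, A'.card + 1 ≤ (Bs G P A').card → A'.card ≤ A.card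

lemma mem_Bs {P A : Finset V} {b : V} : b ∈ Bs G P A ↔ b ∈ P ∧ ∀ a ∈ A, G.Adj a b := by
  simp [Bs]

lemma Bs_subset {P A : Finset V} : Bs G P A ⊆ P := Finset.filter_subset _ _

lemma Bs_adj {P A : Finset V} : ∀ a ∈ A, ∀ b ∈ Bs G P A, G.Adj a b :=
  fun a ha _ hb => (mem_Bs.1 hb).2 a ha

lemma Bs_disjoint {P A : Finset V} : Disjoint A (Bs G P A) := by
  rw [Finset.disjoint_left]
  exact fun a ha hb => G.loopless.irrefl a (Bs_adj a ha a hb)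

lemma exists_maxCore {C P : Finset V} (hP : P.Nonempty) : ∃ A, MaxCore G C P A := by
  obtain ⟨A, hA, hmax⟩ := Finset.exists_max_image
    (C.powerset.filter (fun A => A.card + 1 ≤ (Bs G P A).card)) Finset.card
    ⟨∅, by simp [Bs]; exact hP⟩
  simp only [Finset.mem_filter, Finset.mem_powerset] at hA hmax
  exact ⟨A, hA.1, hA.2, fun A' h1 h2 => hmax A' ⟨h1, h2⟩⟩

/-- A vertex outside `Bs G P A` that belongs to `P` misses some vertex of `A`. -/
lemma MaxCore.ind_add_nd_le {C P A : Finset V} {v : V} (_h : MaxCore G C P A)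
    (hvB : v ∉ Bs G P A) : ind (v ∈ P) + nd G v A ≤ A.card := by
  have h1 := nd_le_card G v A
  by_cases hP : v ∈ P
  · rw [ind_pos hP]
    by_contra hlt
    exact hvB (mem_Bs.2 ⟨hP, fun a ha => (nd_eq_card (G := G) (v := v) (by omega) a ha).symm⟩)
  · rw [ind_neg hP]; omega

/-- Otherwise `v` could be added to `A`. -/
lemma MaxCore.nd_Bs_le {C P A : Finset V} {v : V} (h : MaxCore G C P A) (hv : v ∈ C)
    (hvA : v ∉ A) : nd G v (Bs G P A) ≤ A.card + 1 := by
  by_contra hlt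
  have h1 := Finset.card_insert_of_notMem hvA
  have h2 : nd G v (Bs G P A) ≤ (Bs G P (insert v A)).card := by
    apply Finset.card_le_card
    intro b hb
    rw [Finset.mem_filter] at hb
    refine mem_Bs.2 ⟨Bs_subset hb.1, fun a ha => ?_⟩
    rcases Finset.mem_insert.1 ha with rfl | ha
    · exact hb.2
    · exact Bs_adj a ha b hb.1
  have := h.max (insert v A) (Finset.insert_subset hv h.sub) (by omega)
  omega

lemma Exit.mono {X X' Q : Finset V} {z : V} {e : ℕ} (h : Exit G X Q z e) (hX : X ⊆ X') :
    Exit G X' Q z e := by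
  rcases h with h | ⟨w, q, e', h1, h2, h3, h4⟩
  · exact Or.inl h
  · exact Or.inr ⟨w, q, e', h1, h2.mono hX, h3, h4⟩

/-- The part of a path after its last vertex in `H` is an exit. -/
lemma PL.lastExit {S H Q : Finset V} {u q : V} {m : ℕ} (h : PL G S u q m) (hu : u ∈ H)
    (hq : q ∈ Q) : ∃ z ∈ H, z ∈ S ∧ ∃ e, Exit G (S \ H) Q z e := by
  obtain ⟨p, hp, -, hS⟩ := h
  have : ∀ (u q : V) (p : G.Walk u q), q ∈ Q → p.IsPath → (∀ x ∈ p.support, x ∈ S) →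
      (∃ x ∈ p.support, x ∈ H) → ∃ z ∈ H, z ∈ S ∧ ∃ e, Exit G (S \ H) Q z e := by
    intro u q p
    induction p with
    | nil =>
      rintro hq - hS ⟨x, hx, hxH⟩
      rw [SimpleGraph.Walk.support_nil, List.mem_singleton] at hx
      subst hx
      exact ⟨x, hxH, hS x (by simp), 0, Or.inl ⟨hq, rfl⟩⟩
    | @cons a b c hab p ih =>
      rintro hq hp hS ⟨x, hx, hxH⟩
      rw [SimpleGraph.Walk.cons_isPath_iff] at hp
      have hS' : ∀ x ∈ p.support, x ∈ S := fun x hx => hS x (by simp [hx])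
      by_cases hm : ∃ x ∈ p.support, x ∈ H
      · exact ih hq hp.1 hS' hm
      · push Not at hm
        rw [SimpleGraph.Walk.support_cons, List.mem_cons] at hx
        rcases hx with rfl | hx
        · exact ⟨x, hxH, hS x (by simp), p.length + 1, Or.inr ⟨b, c, p.length, hab,
            ⟨p, hp.1, rfl, fun y hy => Finset.mem_sdiff.2 ⟨hS' y hy, hm y hy⟩⟩, hq, rfl⟩⟩
        · exact absurd hxH (hm x hx)
  exact this u q p hq hp hS ⟨u, p.start_mem_support, hu⟩

/-- An exit from the core turns its paths of consecutive even or odd lengths into admissible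
paths. -/
lemma coreAP {C P Q A : Finset V} {k e : ℕ} {z : V} (hPC : P ⊆ C) (hA : MaxCore G C P A)
    (hz : z ∈ A ∪ Bs G P A) (hex : Exit G (C \ (A ∪ Bs G P A)) Q z e)
    (hk : k ≤ A.card ∨ (z ∈ Bs G P A ∧ k ≤ A.card + 1)) : HasAP G C P Q k := by
  have hHC : A ∪ Bs G P A ⊆ C := Finset.union_subset hA.sub (Bs_subset.trans hPC)
  have hcard := hA.card
  by_cases hzB : z ∈ Bs G P A
  · refine ⟨e, fun i hi => ?_⟩
    obtain ⟨b, hb, hp⟩ := bip_even (G := G) i A (Bs G P A) Bs_disjoint Bs_adj z hzB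
      (by omega) (by omega)
    obtain ⟨q, hq, hpq⟩ := hp.toExit hex Finset.disjoint_sdiff
    refine ⟨b, Bs_subset hb, q, hq, ?_⟩
    rw [add_comm e]
    exact hpq.mono (Finset.union_subset hHC Finset.sdiff_subset)
  · have hzA : z ∈ A := by simpa [hzB] using hz
    refine ⟨1 + e, fun i hi => ?_⟩
    have hk' : k ≤ A.card := by tauto
    obtain ⟨b, hb, hp⟩ := bip_odd (G := G) i A (Bs G P A) Bs_disjoint Bs_adj z hzA
      (by omega) (by omega)
    obtain ⟨q, hq, hpq⟩ := hp.toExit hex Finset.disjoint_sdiff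
    refine ⟨b, Bs_subset hb, q, hq, ?_⟩
    rw [show 1 + e + 2 * i = 1 + 2 * i + e by ring]
    exact hpq.mono (Finset.union_subset hHC Finset.sdiff_subset)

/-- A large core suffices. If `|A| ≥ k`, any exit from the core works; if `k = 2` and `A = {a}`, an exit
from a vertex of `Bs G P A` is needed, and is found by following a path to `Q` that avoids `a`. -/
lemma Strong.kdone {C P Q A : Finset V} {k : ℕ} (h : Strong G C P Q k) (hA : MaxCore G C P A)
    (hk : k ≤ A.card ∨ (k = 2 ∧ A.card = 1)) : HasAP G C P Q k := by
  obtain ⟨b, hb⟩ : (Bs G P A).Nonempty := Finset.card_pos.1 (by have := hA.card; omega)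
  have hbC : b ∈ C := h.good.hPC (Bs_subset hb)
  rcases hk with hk | ⟨hk, hA1⟩
  · obtain ⟨q, hq, n, hp⟩ := exists_PL (G := G) (Z := Q) hbC
      (fun K hK hbK hcl => h.good.hQ K hK ⟨b, hbK⟩ hcl)
    obtain ⟨z, hz, -, e, hex⟩ := hp.lastExit (H := A ∪ Bs G P A) (Finset.mem_union_right _ hb) hq
    exact coreAP h.good.hPC hA hz hex (Or.inl hk)
  · obtain ⟨a, rfl⟩ := Finset.card_eq_one.1 hA1
    have hba : b ≠ a := fun hba => Finset.disjoint_left.1 Bs_disjoint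
      (show b ∈ ({a} : Finset V) by simp [hba]) hb
    have haC : a ∈ C := by simpa using hA.sub
    obtain ⟨q, hq, n, hp⟩ := exists_PL (G := G) (Z := Q) (S := C.erase a) (by simp [hba, hbC])
      (fun K hK hbK hcl => h.cQ a haC K hK ⟨b, hbK⟩ hcl)
    obtain ⟨z, hz, hzS, e, hex⟩ := hp.lastExit (H := {a} ∪ Bs G P {a})
      (Finset.mem_union_right _ hb) hq
    have hzB : z ∈ Bs G P {a} := by
      rcases Finset.mem_union.1 hz with h | h
      · exact absurd (Finset.mem_singleton.1 h) (Finset.ne_of_mem_erase hzS)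
      · exact h
    exact coreAP h.good.hPC hA hz
      (hex.mono (Finset.sdiff_subset_sdiff (Finset.erase_subset _ _) subset_rfl))
      (Or.inr ⟨hzB, by simp [hk]⟩)

lemma comp_nbd {C H U : Finset V} (hcl : Cl G (C \ H) U) : Nbd G C U H := by
  intro v hv u hu huv
  by_cases huH : u ∈ H
  · exact Or.inr huH
  · exact Or.inl (hcl v hv u (by simp [hu, huH]) huv)

/-- Restrictions on a maximum core in an instance without `k` admissible paths. In `tight`, meeting
`Bs G P A` in a vertex of `Q` forces equality in the defining inequality of a core. -/
structure Tame (G : SimpleGraph V) (P Q A : Finset V) (k : ℕ) : Prop where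
  lt : A.card + 1 ≤ k
  three : A.card = 1 → 3 ≤ k
  sub : Q ⊆ A ∪ Bs G P A
  tight : (Q ∩ Bs G P A).Nonempty → (Bs G P A).card = A.card + 1 ∧ A.card + 2 ≤ k

/-- A counterexample is tame. A vertex of `Q` outside the core lies in a component to which
`Strong.gen` applies. If `w ∈ Q` lies in `B = Bs G P A` and `|B| ≥ |A| + 2`, then `w` can be released from
the core and used as the exit of a component to which it is attached. -/
lemma Strong.tame {C P Q A : Finset V} {k : ℕ} (h : Strong G C P Q k) (hno : ¬ HasAP G C P Q k)
    (hA : MaxCore G C P A) : Tame G P Q A k := by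
  have hnk : A.card + 1 ≤ k := by
    by_contra hlt
    exact hno (h.kdone hA (Or.inl (by omega)))
  have h3 : A.card = 1 → 3 ≤ k := by
    intro h1
    by_contra hlt
    exact hno (h.kdone hA (Or.inr ⟨by have := h.two; omega, h1⟩))
  have hBC : Bs G P A ⊆ C := Bs_subset.trans h.good.hPC
  have hE : ∀ {U : Finset V}, U ⊆ C \ (A ∪ Bs G P A) → U ⊆ C ∧ Disjoint U A ∧
      Disjoint U (Bs G P A) := fun hU => ⟨hU.trans Finset.sdiff_subset,
        Finset.sdiff_disjoint.mono hU Finset.subset_union_left,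
        Finset.sdiff_disjoint.mono hU Finset.subset_union_right⟩
  have hsub : Q ⊆ A ∪ Bs G P A := by
    by_contra hns
    obtain ⟨q, hq, hqH⟩ := Finset.not_subset.1 hns
    obtain ⟨U, hU, hqU, hUc, hUcl⟩ := exists_comp G (S := C \ (A ∪ Bs G P A)) (v := q)
      (Finset.mem_sdiff.2 ⟨h.good.hQC hq, hqH⟩)
    obtain ⟨hUC, hUA, hUB⟩ := hE hU
    exact hno (h.gen (Z0 := Q ∩ U) (X0 := ∅) (e0 := 0) hA.sub hBC Bs_subset Bs_adj Bs_disjoint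
      hA.card hnk h3 hUc hUC hUA hUB Finset.inter_subset_right ⟨q, by simp [hq, hqU]⟩
      (fun v hv => hA.ind_add_nd_le (Finset.disjoint_left.1 hUB hv))
      (fun v hv => hA.nd_Bs_le (hUC hv) (Finset.disjoint_left.1 hUA hv))
      (fun z hz => Or.inl ⟨Finset.mem_of_mem_inter_left hz, rfl⟩) (Finset.empty_subset _)
      (Finset.disjoint_empty_left _) (Finset.disjoint_empty_left _) (Finset.disjoint_empty_left _)
      (Or.inl ⟨rfl, comp_nbd hUcl⟩))
  refine ⟨hnk, h3, hsub, ?_⟩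
  rintro ⟨w, hw⟩
  rw [Finset.mem_inter] at hw
  obtain ⟨hwQ, hwB⟩ := hw
  have hnk2 : A.card + 2 ≤ k := by
    by_contra hlt
    exact hno (coreAP (e := 0) h.good.hPC hA (Finset.mem_union_right _ hwB) (Or.inl ⟨hwQ, rfl⟩)
      (Or.inr ⟨hwB, by omega⟩))
  refine ⟨?_, hnk2⟩
  by_contra hne
  have hcard := hA.card
  have hwC := hBC hwB
  have hwA : w ∉ A := Finset.disjoint_right.1 Bs_disjoint hwB
  obtain ⟨u, huE, hwu⟩ : ∃ u ∈ C \ (A ∪ Bs G P A), G.Adj w u := by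
    apply nd_pos
    have h1 := h.good.deg w hwC
    have h2 : nd G w C ≤ nd G w ((A ∪ Bs G P A) ∪ (C \ (A ∪ Bs G P A))) :=
      nd_le_of_subset (fun u hu _ => by
        by_cases h : u ∈ A ∪ Bs G P A
        · exact Finset.mem_union_left _ h
        · exact Finset.mem_union_right _ (Finset.mem_sdiff.2 ⟨hu, h⟩))
    have h3 := nd_union_le G w (A ∪ Bs G P A) (C \ (A ∪ Bs G P A))
    have h4 := nd_union_le G w A (Bs G P A)
    have h5 := nd_le_card G w A
    have h6 := hA.nd_Bs_le hwC hwA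
    have h7 := ind_le (w ∈ P)
    have h8 := ind_le (w ∈ Q)
    omega
  obtain ⟨U, hU, huU, hUc, hUcl⟩ := exists_comp G huE
  obtain ⟨hUC, hUA, hUB⟩ := hE hU
  have hce := Finset.card_erase_of_mem hwB
  -- `w` is released from the core; the remaining second side still has at least `|A| + 1` vertices
  refine hno (h.gen (A1 := A) (B1 := (Bs G P A).erase w) (Z0 := nb G {w} U) (X0 := {w}) (e0 := 1)
    hA.sub ((Finset.erase_subset _ _).trans hBC) ((Finset.erase_subset _ _).trans Bs_subset)
    (fun a ha b hb => Bs_adj a ha b (Finset.mem_of_mem_erase hb))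
    (Bs_disjoint.mono_right (Finset.erase_subset _ _)) (by omega) hnk h3 hUc hUC hUA
    (hUB.mono_right (Finset.erase_subset _ _)) nb_subset ⟨u, mem_nb.2 ⟨huU, w, by simp, hwu⟩⟩
    (fun v hv => hA.ind_add_nd_le (Finset.disjoint_left.1 hUB hv))
    (fun v hv => (nd_le_of_subset (fun u hu _ => Finset.mem_of_mem_erase hu)).trans
      (hA.nd_Bs_le (hUC hv) (Finset.disjoint_left.1 hUA hv)))
    ?_ (by simpa using hwC) ?_ (by simpa using hwA) (by simp)
    (Or.inr ⟨w, hwC, Finset.disjoint_right.1 hUB hwB, hwA, by simp, rfl, ?_, ?_⟩))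
  · intro z hz
    obtain ⟨_, r, hr, hrz⟩ := mem_nb.1 hz
    rw [Finset.mem_singleton] at hr; subst hr
    exact Or.inr ⟨r, r, 0, hrz.symm, PL.refl (by simp), hwQ, rfl⟩
  · simpa using Finset.disjoint_right.1 hUB hwB
  · exact Finset.sdiff_disjoint.mono hU hsub
  · rw [Finset.union_assoc, Finset.union_comm _ {w}, ← Finset.insert_eq, Finset.insert_erase hwB]
    exact comp_nbd hUcl

/-- Exchange argument. If `q ∈ Q ∩ A` and `v ∉ A` had more than `|A|` neighbours in `B = Bs G P A`, then
`A - q + v` would again be a maximum core. By tameness `q ∈ Q` lies in its second side, which then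
contains `q` besides the neighbours of `v` in `B`, contradicting the equality in `Tame.tight`. -/
lemma Strong.nd_le_of_mem {C P Q A : Finset V} {k : ℕ} (h : Strong G C P Q k)
    (hno : ¬ HasAP G C P Q k) (hA : MaxCore G C P A) {q v : V} (hq : q ∈ Q) (hqA : q ∈ A)
    (hv : v ∈ C) (hvA : v ∉ A) : nd G v (Bs G P A) ≤ A.card := by
  by_contra hlt
  have hvq : v ≠ q := fun e => hvA (e ▸ hqA)
  have hvE : v ∉ A.erase q := fun h => hvA (Finset.mem_of_mem_erase h)
  have h1 := Finset.card_insert_of_notMem hvE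
  have h2 := Finset.card_erase_of_mem hqA
  have h3 := Finset.card_pos.2 ⟨q, hqA⟩
  have hsub : (Bs G P A).filter (G.Adj v) ⊆ Bs G P (insert v (A.erase q)) := by
    intro b hb
    rw [Finset.mem_filter] at hb
    refine mem_Bs.2 ⟨Bs_subset hb.1, fun a ha => ?_⟩
    rcases Finset.mem_insert.1 ha with rfl | ha
    · exact hb.2
    · exact Bs_adj a (Finset.mem_of_mem_erase ha) b hb.1
  have h4 : nd G v (Bs G P A) ≤ _ := Finset.card_le_card hsub
  have hA' : MaxCore G C P (insert v (A.erase q)) := ⟨Finset.insert_subset hv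
    ((Finset.erase_subset _ _).trans hA.sub), by omega, fun A' h5 h6 => by
      have := hA.max A' h5 h6; omega⟩
  have hT := h.tame hno hA'
  have hqB : q ∈ Bs G P (insert v (A.erase q)) := by
    rcases Finset.mem_union.1 (hT.sub hq) with h | h
    · simp [hvq.symm] at h
    · exact h
  have h5 := (hT.tight ⟨q, by simp [hq, hqB]⟩).1
  have hqn : q ∉ (Bs G P A).filter (G.Adj v) := fun h =>
    Finset.disjoint_left.1 Bs_disjoint hqA (Finset.mem_filter.1 h).1
  have h6 := Finset.card_le_card (Finset.insert_subset hqB hsub)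
  rw [Finset.card_insert_of_notMem hqn] at h6
  unfold nd at hlt
  omega

/-! ### Conclusion of the induction -/

/-- A vertex `a ∈ A ∩ Q` is released from the core. The hypothesis `hadj` keeps the degree bounds of
`Strong.gen` valid for `A - a`. The exit runs through `a` directly when the chosen component is attached
to `a`, and through an edge `ba` with `b ∈ Bs G P A` otherwise. -/
lemma Strong.case1 {C P Q A : Finset V} {k : ℕ} {a : V} (h : Strong G C P Q k)
    (hno : ¬ HasAP G C P Q k) (hA : MaxCore G C P A) (haQ : a ∈ Q) (haA : a ∈ A)
    (hadj : ∀ v ∈ P, v ∉ A ∪ Bs G P A → G.Adj v a) : False := by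
  have hT := h.tame hno hA
  have hBC : Bs G P A ⊆ C := Bs_subset.trans h.good.hPC
  have hcard := hA.card
  have hpos := Finset.card_pos.2 ⟨a, haA⟩
  have hAe := Finset.card_erase_of_mem haA
  have haC := hA.sub haA
  have haB : a ∉ Bs G P A := Finset.disjoint_left.1 Bs_disjoint haA
  obtain ⟨b, hb⟩ : (Bs G P A).Nonempty := Finset.card_pos.1 (by omega)
  have hBe := Finset.card_erase_of_mem hb
  have hbC := hBC hb
  have hbA : b ∉ A := Finset.disjoint_right.1 Bs_disjoint hb
  have hab : a ≠ b := fun e => hbA (e ▸ haA)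
  have hE1 : ∀ v ∈ C, v ∉ A → nd G v (Bs G P A) ≤ A.card := fun v hv hvA =>
    h.nd_le_of_mem hno hA haQ haA hv hvA
  obtain ⟨u, huE, hbu⟩ : ∃ u ∈ C \ (A ∪ Bs G P A), G.Adj b u := by
    apply nd_pos
    have h1 := h.good.deg b hbC
    have h2 : nd G b C ≤ nd G b ((A ∪ Bs G P A) ∪ (C \ (A ∪ Bs G P A))) :=
      nd_le_of_subset (fun u hu _ => by
        by_cases h : u ∈ A ∪ Bs G P A
        · exact Finset.mem_union_left _ h
        · exact Finset.mem_union_right _ (Finset.mem_sdiff.2 ⟨hu, h⟩))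
    have h3 := nd_union_le G b (A ∪ Bs G P A) (C \ (A ∪ Bs G P A))
    have h4 := nd_union_le G b A (Bs G P A)
    have h5 := nd_le_card G b A
    have h6 := hE1 b hbC hbA
    have h7 := ind_le (b ∈ P)
    have h8 := hT.lt
    by_cases hbQ : b ∈ Q
    · have := (hT.tight ⟨b, by simp [hbQ, hb]⟩).2
      have := ind_le (b ∈ Q)
      omega
    · have := ind_neg hbQ
      omega
  obtain ⟨U, hU, huU, hUc, hUcl⟩ := exists_comp G huE
  have hUC : U ⊆ C := hU.trans Finset.sdiff_subset
  have hUH : Disjoint U (A ∪ Bs G P A) := Finset.sdiff_disjoint.mono_left hU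
  have hUA : Disjoint U A := hUH.mono_right Finset.subset_union_left
  have hUB : Disjoint U (Bs G P A) := hUH.mono_right Finset.subset_union_right
  have haU : a ∉ U := Finset.disjoint_right.1 hUA haA
  have hbU : b ∉ U := Finset.disjoint_right.1 hUB hb
  have hUQ : Disjoint U Q := hUH.mono_right hT.sub
  have hn := comp_nbd hUcl
  have hAeC : A.erase a ⊆ C := (Finset.erase_subset _ _).trans hA.sub
  have b1 : ∀ v ∈ U, ind (v ∈ P) + nd G v (A.erase a) ≤ (A.erase a).card := by
    intro v hv
    by_cases hva : G.Adj v a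
    · have h1 := hA.ind_add_nd_le (Finset.disjoint_left.1 hUB hv)
      have h2 : nd G v (A.erase a) + 1 ≤ nd G v A := by
        unfold nd
        rw [Finset.filter_erase, Finset.card_erase_add_one (by simp [haA, hva])]
      omega
    · rw [ind_neg (fun hvP => hva (hadj v hvP (Finset.disjoint_left.1 hUH hv))), zero_add]
      exact nd_le_card _ _ _
  have b2 : ∀ v ∈ U, nd G v (Bs G P A) ≤ (A.erase a).card + 1 := by
    intro v hv
    have := hE1 v (hUC hv) (Finset.disjoint_left.1 hUA hv)
    omega
  have hk3 : (A.erase a).card = 1 → 3 ≤ k := by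
    have := hT.lt
    omega
  have hlt := hT.lt
  by_cases hUa : (nb G {a} U).Nonempty
  · refine hno (h.gen (A1 := A.erase a) (B1 := Bs G P A) (Z0 := nb G {a} U) (X0 := {a}) (e0 := 1)
      hAeC hBC Bs_subset (fun a' ha' b hb => Bs_adj a' (Finset.mem_of_mem_erase ha') b hb)
      (Bs_disjoint.mono_left (Finset.erase_subset _ _)) (by omega) (by omega) hk3 hUc hUC
      (hUA.mono_right (Finset.erase_subset _ _)) hUB nb_subset hUa b1 b2 ?_ (by simpa using haC)
      (by simpa using haU) (by simp) (by simpa using haB)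
      (Or.inr ⟨a, haC, haU, by simp, haB, rfl, hUQ, ?_⟩))
    · intro z hz
      obtain ⟨_, r, hr, hrz⟩ := mem_nb.1 hz
      rw [Finset.mem_singleton] at hr; subst hr
      exact Or.inr ⟨r, r, 0, hrz.symm, PL.refl (by simp), haQ, rfl⟩
    · rw [Finset.union_comm, ← Finset.union_assoc, ← Finset.insert_eq, Finset.insert_erase haA]
      exact hn
  · have hPL : PL G {b, a} b a 1 := by
      have := (PL.refl (G := G) (Finset.mem_singleton_self b)).join (Bs_adj a haA b hb).symm
        (PL.refl (Finset.mem_singleton_self a)) (by simpa using hab.symm)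
      simpa using this
    refine hno (h.gen (A1 := A.erase a) (B1 := (Bs G P A).erase b) (Z0 := nb G {b} U)
      (X0 := {b, a}) (e0 := 2)
      hAeC ((Finset.erase_subset _ _).trans hBC) ((Finset.erase_subset _ _).trans Bs_subset)
      (fun a' ha' b hb => Bs_adj a' (Finset.mem_of_mem_erase ha') b (Finset.mem_of_mem_erase hb))
      (Bs_disjoint.mono (Finset.erase_subset _ _) (Finset.erase_subset _ _)) (by omega) (by omega)
      hk3 hUc hUC
      (hUA.mono_right (Finset.erase_subset _ _)) (hUB.mono_right (Finset.erase_subset _ _))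
      nb_subset ⟨u, mem_nb.2 ⟨huU, b, by simp, hbu⟩⟩ b1
      (fun v hv => (nd_le_of_subset (fun u hu _ => Finset.mem_of_mem_erase hu)).trans (b2 v hv))
      ?_ (by simp [Finset.insert_subset_iff, haC, hbC])
      (by simp [haU, hbU]) (by simp [hbA]) (by simp [haB])
      (Or.inr ⟨b, hbC, hbU, by simp [hbA], by simp, rfl, hUQ, ?_⟩))
    · intro z hz
      obtain ⟨_, r, hr, hrz⟩ := mem_nb.1 hz
      rw [Finset.mem_singleton] at hr; subst hr
      exact Or.inr ⟨r, a, 1, hrz.symm, hPL, haQ, rfl⟩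
    · intro v hv w hw hvw
      rcases hn v hv w hw hvw with h | h
      · exact Or.inl h
      · right
        have hwa : w ≠ a := by
          rintro rfl
          exact hUa ⟨v, mem_nb.2 ⟨hv, w, by simp, hvw.symm⟩⟩
        by_cases hwb : w = b
        · simp [hwb]
        · simpa [hwa, hwb] using h

/-- `Strong.case1` applies as soon as `P` is not contained in the core or `Q` meets `A`. In the
first situation the vertices of `P` outside the core lie in `A'`, where `A'` is a maximum core for `Q`, so
they are adjacent to every vertex of `Bs G Q A'`. If `Bs G Q A'` met `A` in no vertex, it would lie in
`Bs G P A`, and `nd_le_of_mem` for `A'` would make `A'` strictly larger than `A`, contradicting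
`|Bs G P A| = |A| + 1`. -/
lemma Strong.case1_of {C P Q A A' : Finset V} {k : ℕ} (h : Strong G C P Q k)
    (hno : ¬ HasAP G C P Q k) (hA : MaxCore G C P A) (hA' : MaxCore G C Q A')
    (hor : (∃ v ∈ P, v ∉ A ∪ Bs G P A) ∨ (Q ∩ A).Nonempty) : False := by
  have hT := h.tame hno hA
  have hno' : ¬ HasAP G C Q P k := fun hh => hno hh.symm
  have hT' := h.symm.tame hno' hA'
  by_cases hv0 : ∃ v ∈ P, v ∉ A ∪ Bs G P A
  · have hin : ∀ v ∈ P, v ∉ A ∪ Bs G P A → v ∈ A' := by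
      intro v hv hvH
      rcases Finset.mem_union.1 (hT'.sub hv) with h | h
      · exact h
      · exact absurd (hT.sub (Bs_subset h)) hvH
    by_cases hBA : (Bs G Q A' ∩ A).Nonempty
    · obtain ⟨a, ha⟩ := hBA
      rw [Finset.mem_inter] at ha
      exact h.case1 hno hA (Bs_subset ha.1) ha.2
        (fun v hv hvH => Bs_adj v (hin v hv hvH) a ha.1)
    · have hBB : Bs G Q A' ⊆ Bs G P A := by
        intro b hb
        rcases Finset.mem_union.1 (hT.sub (Bs_subset hb)) with h | h
        · exact absurd ⟨b, by simp [h, hb]⟩ hBA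
        · exact h
      obtain ⟨v0, hv0P, hv0H⟩ := hv0
      have hv0A' := hin v0 hv0P hv0H
      have hc' := hA'.card
      obtain ⟨b, hb⟩ : (Bs G Q A').Nonempty := Finset.card_pos.1 (by omega)
      have h1 := (hT.tight ⟨b, by simp [hBB hb, Bs_subset hb]⟩).1
      -- a vertex of `A` outside `A'` would be adjacent to all of `Bs G Q A'`, too many by
      -- `nd_le_of_mem`
      have hAA : insert v0 A ⊆ A' := by
        refine Finset.insert_subset hv0A' fun u hu => ?_
        by_contra huA'
        have h2 := h.symm.nd_le_of_mem hno' hA' hv0P hv0A' (hA.sub hu) huA'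
        have h3 : nd G u (Bs G Q A') = (Bs G Q A').card := by
          unfold nd
          rw [Finset.filter_true_of_mem (fun b hb => Bs_adj u hu b (hBB hb))]
        omega
      have h4 := Finset.card_le_card hAA
      rw [Finset.card_insert_of_notMem (fun h => hv0H (Finset.mem_union_left _ h))] at h4
      have h5 := Finset.card_le_card hBB
      omega
  · have hQA : (Q ∩ A).Nonempty := hor.resolve_left hv0
    push Not at hv0
    obtain ⟨a, ha⟩ := hQA
    rw [Finset.mem_inter] at ha
    exact h.case1 hno hA ha.1 ha.2 (fun v hv hvH => absurd (hv0 v hv) hvH)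

/-- The case `P = Q = Bs G P A`: release one vertex `a` of `A`, whose component in the rest is the
instance to which `Strong.gen` applies, and one vertex `w` of `P`, which is the exit. -/
lemma Strong.case2 {C P Q A : Finset V} {k : ℕ} (h : Strong G C P Q k)
    (hno : ¬ HasAP G C P Q k) (hA : MaxCore G C P A) (hPB : Bs G P A = P) (hPQ : P = Q) :
    False := by
  subst hPQ
  have hT := h.tame hno hA
  have hcard := hA.card
  have hdisj := Bs_disjoint (G := G) (P := P) (A := A)
  have hAdj := Bs_adj (G := G) (P := P) (A := A)
  have htight := hT.tight
  rw [hPB] at hcard hdisj htight hAdj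
  have hPC := h.good.hPC
  obtain ⟨w, hw⟩ : P.Nonempty := Finset.card_pos.1 (by omega)
  have hwC := hPC hw
  obtain ⟨h1, h2⟩ := htight ⟨w, by simp [hw]⟩
  -- if `A` were empty, `P` would be the single vertex `w`, against `h.cP`
  have hA0 : A.Nonempty := by
    have h3 := h.good.deg w hwC
    have h4 := ind_le (w ∈ P)
    have h5 := h.two
    obtain ⟨u, hu, hwu⟩ := nd_pos (G := G) (v := w) (S := C) (by omega)
    obtain ⟨p, hp⟩ := h.cP w hwC (C.erase w) subset_rfl
      ⟨u, Finset.mem_erase.2 ⟨hwu.ne', hu⟩⟩ (fun _ _ v hv _ => hv)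
    rw [Finset.mem_inter, Finset.mem_erase] at hp
    have := Finset.one_lt_card.2 ⟨p, hp.2, w, hw, hp.1.1⟩
    exact Finset.card_pos.1 (by omega)
  obtain ⟨a, ha⟩ := hA0
  have haP : a ∉ P := Finset.disjoint_left.1 hdisj ha
  have hwA : w ∉ A := Finset.disjoint_right.1 hdisj hw
  have hpos := Finset.card_pos.2 ⟨a, ha⟩
  have hAe := Finset.card_erase_of_mem ha
  have hPe := Finset.card_erase_of_mem hw
  obtain ⟨U, hU, haU, hUc, hUcl⟩ := exists_comp G (S := C \ (A.erase a ∪ P)) (v := a)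
    (by simp [hA.sub ha, haP])
  have hUC : U ⊆ C := hU.trans Finset.sdiff_subset
  have hUH : Disjoint U (A.erase a ∪ P) := Finset.sdiff_disjoint.mono_left hU
  have hUA := hUH.mono_right (Finset.subset_union_left)
  have hUP := hUH.mono_right (Finset.subset_union_right)
  refine hno (h.gen (A1 := A.erase a) (B1 := P.erase w) (Z0 := nb G {w} U) (X0 := {w}) (e0 := 1)
    ((Finset.erase_subset _ _).trans hA.sub) ((Finset.erase_subset _ _).trans hPC)
    (Finset.erase_subset _ _)
    (fun a' ha' b hb => hAdj a' (Finset.mem_of_mem_erase ha') b (Finset.mem_of_mem_erase hb))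
    (hdisj.mono (Finset.erase_subset _ _) (Finset.erase_subset _ _)) (by omega) (by omega)
    (by omega) hUc hUC hUA (hUP.mono_right (Finset.erase_subset _ _)) nb_subset
    ⟨a, mem_nb.2 ⟨haU, w, by simp, (hAdj a ha w hw).symm⟩⟩ ?_ ?_ ?_ (by simpa using hwC)
    (by simpa using Finset.disjoint_right.1 hUP hw) (by simp [hwA]) (by simp)
    (Or.inr ⟨w, hwC, Finset.disjoint_right.1 hUP hw, by simp [hwA], by simp, rfl, hUP, ?_⟩))
  · intro v hv
    rw [ind_neg (Finset.disjoint_left.1 hUP hv), zero_add]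
    exact nd_le_card _ _ _
  · intro v hv
    have := nd_le_card G v (P.erase w)
    omega
  · intro z hz
    obtain ⟨_, r, hr, hrz⟩ := mem_nb.1 hz
    rw [Finset.mem_singleton] at hr; subst hr
    exact Or.inr ⟨r, r, 0, hrz.symm, PL.refl (by simp), hw, rfl⟩
  · rw [Finset.union_assoc, Finset.union_comm _ {w}, ← Finset.insert_eq, Finset.insert_erase hw]
    exact comp_nbd hUcl

lemma Strong.hasAP {C P Q : Finset V} {k : ℕ} (h : Strong G C P Q k) : HasAP G C P Q k := by
  by_contra hno
  have hno' : ¬ HasAP G C Q P k := fun hh => hno hh.symm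
  have hne : ∀ {R : Finset V}, (C ∩ R).Nonempty → R.Nonempty :=
    fun h => h.mono Finset.inter_subset_right
  obtain ⟨A, hA⟩ := exists_maxCore (G := G) (C := C)
    (hne (h.good.hP C subset_rfl h.good.ne (fun _ _ v hv _ => hv)))
  obtain ⟨A', hA'⟩ := exists_maxCore (G := G) (C := C)
    (hne (h.good.hQ C subset_rfl h.good.ne (fun _ _ v hv _ => hv)))
  have hT := h.tame hno hA
  have hT' := h.symm.tame hno' hA'
  have c1 := mt (h.case1_of hno hA hA') id
  have c2 := mt (h.symm.case1_of hno' hA' hA) id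
  push Not at c1 c2
  have key : ∀ {R S A : Finset V}, R ⊆ A ∪ Bs G S A → R ∩ A = ∅ → R ⊆ Bs G S A := by
    intro R S A h1 h2 v hv
    rcases Finset.mem_union.1 (h1 hv) with h | h
    · have : v ∈ R ∩ A := by simp [hv, h]
      rw [h2] at this; simp at this
    · exact h
  have hQB := key hT.sub c1.2
  have hPB := key hT'.sub c2.2
  have hPQ : P = Q := Finset.Subset.antisymm (hPB.trans Bs_subset) (hQB.trans Bs_subset)
  refine h.case2 hno hA (Finset.Subset.antisymm Bs_subset ?_) hPQ
  rwa [← hPQ] at hQB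

/-- The theorem for the reformulated instances, by induction on the number of vertices. A disconnected
`C` is replaced by one of its components, and for `k = 1` any path will do. -/
theorem Good.hasAP : ∀ (n : ℕ), IH G n := by
  intro n
  induction n with
  | zero => intro C P Q k h; omega
  | succ n ihn =>
    intro C P Q k hlt hg
    have ih : IH G C.card := fun C' P' Q' k' h1 h2 => ihn C' P' Q' k' (by omega) h2
    rcases Nat.eq_zero_or_pos k with rfl | hk
    · exact ⟨0, by omega⟩
    by_cases hC : Conn G C
    · rcases Nat.lt_or_ge k 2 with hk2 | hk2
      · obtain ⟨p, hp⟩ := hg.hP C subset_rfl hg.ne (fun _ _ v hv _ => hv)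
        rw [Finset.mem_inter] at hp
        obtain ⟨q, hq, m, hm⟩ := hC.exists_PL hp.1
          (hg.hQ C subset_rfl hg.ne (fun _ _ v hv _ => hv))
        exact ⟨m, fun i hi => ⟨p, hp.2, q, hq, by rwa [show m + 2 * i = m by omega]⟩⟩
      · rcases red hg hC ih with hcQ | hdone
        · rcases red hg.symm hC ih with hcP | hdone
          · exact Strong.hasAP ⟨hg, hC, hk2, ih, hcP, hcQ⟩
          · exact hdone.symm
        · exact hdone
    · obtain ⟨v, hv⟩ := hg.ne
      obtain ⟨U, hUC, hvU, hU, hcl⟩ := exists_comp G hv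
      have hne : U ≠ C := fun e => hC (e ▸ hU)
      have h1 := ih U (P ∩ U) (Q ∩ U) k (Finset.card_lt_card (hUC.ssubset_of_ne hne))
        (Good.of_conn hU Finset.inter_subset_right Finset.inter_subset_right
          (by rw [Finset.inter_comm]; exact hg.hP U hUC hU.1 hcl)
          (by rw [Finset.inter_comm]; exact hg.hQ U hUC hU.1 hcl)
          (by
            intro c hc K hK hKne hKcl
            have hKU := hK.trans (Finset.erase_subset _ _)
            obtain ⟨w, hw⟩ := hg.hc c (hUC hc) K (hK.trans (Finset.erase_subset_erase _ hUC)) hKne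
              (fun u hu w hw huw => hKcl u hu w (Finset.mem_erase.2 ⟨Finset.ne_of_mem_erase hw,
                hcl u (hKU hu) w (Finset.mem_of_mem_erase hw) huw⟩) huw)
            rw [Finset.mem_inter, Finset.mem_union] at hw
            refine ⟨w, ?_⟩
            simp [hw.1, hKU hw.1, hw.2])
          (by
            intro v hv
            have h2 := hg.deg v (hUC hv)
            have h3 : nd G v C ≤ nd G v U := nd_le_of_subset (fun u hu huv => hcl v hv u hu huv)
            have : ind (v ∈ P ∩ U) = ind (v ∈ P) := by congr 1; simp [hv]
            have : ind (v ∈ Q ∩ U) = ind (v ∈ Q) := by congr 1; simp [hv]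
            omega))
      exact h1.mono hUC Finset.inter_subset_left Finset.inter_subset_left le_rfl

/-! ### Return to rooted graphs -/

/-- If `H - v` is connected, a nonempty vertex set closed under adjacency in `H - v` is everything
but `v`. -/
lemma all_of_closed {H : SimpleGraph V} {v : V} (hH : (H.induce ({v}ᶜ : Set V)).Connected)
    {K : Finset V} (hne : K.Nonempty) (hv : v ∉ K)
    (hcl : ∀ u ∈ K, ∀ w, w ≠ v → H.Adj u w → w ∈ K) {w : V} (hw : w ≠ v) : w ∈ K := by
  obtain ⟨u, hu⟩ := hne
  have huv : u ≠ v := fun e => hv (e ▸ hu)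
  obtain ⟨p⟩ := hH.preconnected ⟨u, huv⟩ ⟨w, hw⟩
  have : ∀ (a b : ({v}ᶜ : Set V)) (p : (H.induce ({v}ᶜ : Set V)).Walk a b),
      (a : V) ∈ K → (b : V) ∈ K := by
    intro a b p
    induction p with
    | nil => exact id
    | @cons a b c hab p ih => exact fun ha => ih (hcl a ha b b.2 hab)
  exact this _ _ p hu

/-- Deleting the roots turns the hypotheses of the theorem into `Good`. The edge `xy` is irrelevant because
only adjacencies of vertices other than `x` and `y` are used. -/
lemma good_of_rooted [Fintype V] {k : ℕ} {x y : V} (hroot : RootedTwoConnected G x y)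
    (hdeg : ∀ v, v ≠ x → v ≠ y → 2 * k ≤ nd G v Finset.univ) :
    Good G ({x, y}ᶜ) (nb G {x} {x, y}ᶜ) (nb G {y} {x, y}ᶜ) k := by
  obtain ⟨hxy, -, hcard, hH⟩ := hroot
  have hC : ∀ {v : V}, v ∈ ({x, y}ᶜ : Finset V) ↔ v ≠ x ∧ v ≠ y := by
    intro v; simp
  have hadj : ∀ {u w : V}, u ≠ x → u ≠ y →
      (G ⊔ SimpleGraph.fromEdgeSet {s(x, y)}).Adj u w → G.Adj u w := by
    intro u w h1 h2 h
    rw [SimpleGraph.sup_adj, SimpleGraph.fromEdgeSet_adj] at h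
    rcases h with h | ⟨h, -⟩
    · exact h
    · rw [Set.mem_singleton_iff, Sym2.eq_iff] at h
      rcases h with h | h
      · exact absurd h.1 h1
      · exact absurd h.1 h2
  have hmem : ∀ {u t : V}, u ∈ ({x, y}ᶜ : Finset V) → G.Adj u t → u ∈ nb G {t} {x, y}ᶜ :=
    fun hu hut => mem_nb.2 ⟨hu, _, Finset.mem_singleton_self _, hut.symm⟩
  have main : ∀ s t : V, s ≠ t → (∀ v, v ∈ ({x, y}ᶜ : Finset V) ↔ v ≠ s ∧ v ≠ t) →
      ∀ K ⊆ ({x, y}ᶜ : Finset V), K.Nonempty →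
      Cl G {x, y}ᶜ K → (K ∩ nb G {s} {x, y}ᶜ).Nonempty := by
    intro s t hst hst' K hK hne hcl
    by_contra hm
    have := all_of_closed (hH t) hne (fun h => ((hst' t).1 (hK h)).2 rfl) (by
      intro u hu w hw huw
      have h1 := hC.1 (hK hu)
      have h2 := hadj h1.1 h1.2 huw
      by_cases hws : w = s
      · subst hws
        exact absurd ⟨u, by simp only [Finset.mem_inter]; exact ⟨hu, hmem (hK hu) h2⟩⟩ hm
      · exact hcl u hu w ((hst' w).2 ⟨hws, hw⟩) h2) hst
    exact ((hst' s).1 (hK this)).1 rfl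
  refine ⟨?_, nb_subset, nb_subset, main x y hxy (fun v => hC),
    main y x hxy.symm (fun v => by rw [hC, and_comm]), ?_, ?_⟩
  · rw [← Finset.card_pos, Finset.card_compl]
    have := Finset.card_le_two (a := x) (b := y)
    omega
  · intro c hc K hK hne hcl
    by_contra hm
    have := all_of_closed (hH c) hne (fun h => Finset.notMem_erase c _ (hK h)) (w := x) (by
      intro u hu w hw huw
      have huC := Finset.mem_of_mem_erase (hK hu)
      have h1 := hC.1 huC
      have h2 := hadj h1.1 h1.2 huw
      by_cases hwx : w = x
      · subst hwx
        exact absurd ⟨u, by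
          simp only [Finset.mem_inter, Finset.mem_union]; exact ⟨hu, Or.inl (hmem huC h2)⟩⟩ hm
      by_cases hwy : w = y
      · subst hwy
        exact absurd ⟨u, by
          simp only [Finset.mem_inter, Finset.mem_union]; exact ⟨hu, Or.inr (hmem huC h2)⟩⟩ hm
      exact hcl u hu w (Finset.mem_erase.2 ⟨hw, hC.2 ⟨hwx, hwy⟩⟩) h2) (hC.1 hc).1.symm
    exact (hC.1 (Finset.mem_of_mem_erase (hK this))).1 rfl
  · intro v hv
    have h1 := hdeg v (hC.1 hv).1 (hC.1 hv).2
    have h2 : nd G v Finset.univ ≤ nd G v ({x, y}ᶜ ∪ {x, y}) := nd_le_of_subset (fun u _ _ => by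
      by_cases h : u ∈ ({x, y} : Finset V)
      · exact Finset.mem_union_right _ h
      · exact Finset.mem_union_left _ (Finset.mem_compl.2 h))
    have h3 := nd_union_le G v {x, y}ᶜ {x, y}
    have h4 := nd_pair_le (G := G) v x y
    rw [ind_nb hv, ind_nb hv]
    omega

/-- A path between neighbours of `x` and `y` avoiding both extends by two edges to a path from `x` to
`y`. -/
lemma PL.walk {S : Finset V} {x y p q : V} {n : ℕ} (h : PL G S p q n) (hxy : x ≠ y)
    (hx : x ∉ S) (hy : y ∉ S) (hp : G.Adj x p) (hq : G.Adj y q) :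
    ∃ w : G.Walk x y, w.IsPath ∧ w.length = n + 2 := by
  have h1 := (PL.refl (G := G) (Finset.mem_singleton_self x)).join hp h (by simpa using hx)
  obtain ⟨w, hw, hl, -⟩ := h1.join hq.symm (PL.refl (Finset.mem_singleton_self y))
    (by simp [hxy.symm, hy])
  exact ⟨w, hw, by omega⟩

end PathAP

end

/-- If `(G, x, y)` is a 2-connected rooted graph in which every vertex other than
`x` and `y` has degree at least `2k`, then `G` contains `k` paths from `x` to `y`
satisfying the length condition: the first has length at least `2` and consecutive
paths have lengths differing by exactly `2`. -/
theorem k_paths_length_condition {V : Type*} [Fintype V] (k : ℕ) (hk : 0 < k)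
    (G : SimpleGraph V) [DecidableRel G.Adj] (x y : V)
    (hroot : RootedTwoConnected G x y)
    (hdeg : ∀ v : V, v ≠ x → v ≠ y → 2 * k ≤ G.degree v) :
    ∃ p : ℕ → G.Walk x y,
      (∀ i, 1 ≤ i → i ≤ k → (p i).IsPath) ∧
      2 ≤ (p 1).length ∧
      (∀ i, 1 ≤ i → i ≤ k - 1 → (p (i + 1)).length = (p i).length + 2) := by
  classical
  obtain ⟨l, hl⟩ := PathAP.Good.hasAP _ _ _ _ k (Nat.lt_succ_self _)
    (PathAP.good_of_rooted (k := k) hroot (fun v hvx hvy => by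
      have h := hdeg v hvx hvy
      rw [← SimpleGraph.card_neighborFinset_eq_degree, SimpleGraph.neighborFinset_eq_filter] at h
      unfold PathAP.nd
      convert h))
  have hex : ∀ i, i < k → ∃ w : G.Walk x y, w.IsPath ∧ w.length = l + 2 * i + 2 := by
    intro i hi
    obtain ⟨p, hp, q, hq, hpq⟩ := hl i hi
    obtain ⟨_, r, hr, hrp⟩ := PathAP.mem_nb.1 hp
    obtain ⟨_, s, hs, hsq⟩ := PathAP.mem_nb.1 hq
    rw [Finset.mem_singleton] at hr hs
    subst hr hs
    exact hpq.walk hroot.1 (by simp) (by simp) hrp hsq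
  obtain ⟨w0, -⟩ := hex 0 hk
  have hex' : ∀ i, ∃ w : G.Walk x y, i < k → w.IsPath ∧ w.length = l + 2 * i + 2 := by
    intro i
    by_cases hi : i < k
    · obtain ⟨w, hw⟩ := hex i hi
      exact ⟨w, fun _ => hw⟩
    · exact ⟨w0, fun h => absurd h hi⟩
  choose f hf using hex'
  refine ⟨fun i => f (i - 1), fun i h1 h2 => (hf (i - 1) (by omega)).1, ?_, fun i h1 h2 => ?_⟩
  · have := (hf 0 hk).2
    simp only [Nat.sub_self]; omega
  · have h3 := (hf (i - 1) (by omega)).2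
    have h4 := (hf i (by omega)).2
    simp only [Nat.add_sub_cancel]; omega
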